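/- arXiv:1803.10337 — 2 statements merged into one kernel-verified Lean document; each statement's English description precedes it below -/
import Mathlib

section
/- The Hilbert function of M is unimodal: there exists an integer p such that dim_K M_{d−1} ≤ dim_K M_d for all d ≤ p and dim_K M_d ≥ dim_K M_{d+1} for all d ≥ p. -/
open MvPolynomial

noncomputable section

variable {K : Type*} [Field K]

/-- `p` is homogeneous of (integer) degree `d`; for `d < 0` this forces `p = 0`. -/
def homog (p : MvPolynomial (Fin 3) K) (d : ℤ) : Prop :=
  IsWeightedHomogeneous (fun _ : Fin 3 => (1 : ℤ)) p d

/-- The degree-`d` graded piece of `⊕_{i=1}^{N} R(-a i)`, as a `K`-subspace of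
`Fin N → R`, `R = K[x,y,z]`. -/
def degPiece (N : ℕ) (a : Fin N → ℤ) (d : ℤ) :
    Submodule K (Fin N → MvPolynomial (Fin 3) K) :=
  Submodule.pi Set.univ fun i =>
    weightedHomogeneousSubmodule K (fun _ : Fin 3 => (1 : ℤ)) (d - a i)

lemma mem_degPiece {N : ℕ} {a : Fin N → ℤ} {d : ℤ} {v : Fin N → MvPolynomial (Fin 3) K} :
    v ∈ degPiece (K := K) N a d ↔ ∀ i, homog (v i) (d - a i) := by
  simp [degPiece, Submodule.mem_pi, mem_weightedHomogeneousSubmodule, homog]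

/-- The map `φ : ⊕ R(-a i) → ⊕ R(-b j)` given by the matrix `Φ`, as a `K`-linear map. -/
def phiK (n : ℕ) (Φ : Matrix (Fin n) (Fin (n + 2)) (MvPolynomial (Fin 3) K)) :
    (Fin (n + 2) → MvPolynomial (Fin 3) K) →ₗ[K] (Fin n → MvPolynomial (Fin 3) K) :=
  (Matrix.mulVecLin Φ).restrictScalars K

/-- The degree-`d` graded piece of `N = ker φ`. -/
def Nd (n : ℕ) (a : Fin (n + 2) → ℤ) (Φ : Matrix (Fin n) (Fin (n + 2)) (MvPolynomial (Fin 3) K))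
    (d : ℤ) : Submodule K (Fin (n + 2) → MvPolynomial (Fin 3) K) :=
  degPiece (n + 2) a d ⊓ LinearMap.ker (phiK n Φ)

/-- The image of the degree-`d` piece of `F` inside the degree-`d` piece of `G`,
viewed as a subspace of the latter. -/
def MdSub (n : ℕ) (a : Fin (n + 2) → ℤ) (b : Fin n → ℤ)
    (Φ : Matrix (Fin n) (Fin (n + 2)) (MvPolynomial (Fin 3) K)) (d : ℤ) :
    Submodule K ↥(degPiece (K := K) n b d) :=
  Submodule.comap (degPiece (K := K) n b d).subtype
    (Submodule.map (phiK n Φ) (degPiece (n + 2) a d))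

/-- The degree-`d` graded piece of `M = coker φ`. -/
abbrev Md (n : ℕ) (a : Fin (n + 2) → ℤ) (b : Fin n → ℤ)
    (Φ : Matrix (Fin n) (Fin (n + 2)) (MvPolynomial (Fin 3) K)) (d : ℤ) :=
  ↥(degPiece (K := K) n b d) ⧸ MdSub n a b Φ d

/-- Multiplication by `L` on tuples of polynomials, as a `K`-linear map. -/
def mulL (N : ℕ) (L : MvPolynomial (Fin 3) K) :
    (Fin N → MvPolynomial (Fin 3) K) →ₗ[K] (Fin N → MvPolynomial (Fin 3) K) :=
  ((LinearMap.lsmul (MvPolynomial (Fin 3) K) (Fin N → MvPolynomial (Fin 3) K)) L).restrictScalars K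

lemma mulL_apply {N : ℕ} (L : MvPolynomial (Fin 3) K) (v : Fin N → MvPolynomial (Fin 3) K) :
    mulL N L v = L • v := rfl

lemma mulL_mem {N : ℕ} {a : Fin N → ℤ} {L : MvPolynomial (Fin 3) K} (hL : homog L 1)
    {d : ℤ} {v : Fin N → MvPolynomial (Fin 3) K} (hv : v ∈ degPiece (K := K) N a (d - 1)) :
    mulL N L v ∈ degPiece (K := K) N a d := by
  rw [mem_degPiece] at hv ⊢
  intro i
  have h := hL.mul (hv i)
  have e : (1 : ℤ) + (d - 1 - a i) = d - a i := by ring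
  rw [e] at h
  simpa [mulL_apply, smul_eq_mul, homog] using h

/-- Multiplication by `L` from the degree-`d-1` piece of `G` to the degree-`d` piece. -/
def mulLres (n : ℕ) (b : Fin n → ℤ) (L : MvPolynomial (Fin 3) K) (hL : homog L 1) (d : ℤ) :
    ↥(degPiece (K := K) n b (d - 1)) →ₗ[K] ↥(degPiece (K := K) n b d) :=
  (mulL n L).restrict fun _ hv => mulL_mem hL hv

lemma mulLres_comap (n : ℕ) (a : Fin (n + 2) → ℤ) (b : Fin n → ℤ)
    (Φ : Matrix (Fin n) (Fin (n + 2)) (MvPolynomial (Fin 3) K))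
    (L : MvPolynomial (Fin 3) K) (hL : homog L 1) (d : ℤ) :
    MdSub n a b Φ (d - 1) ≤ Submodule.comap (mulLres n b L hL d) (MdSub n a b Φ d) := by
  rintro ⟨w, hw⟩ hmem
  obtain ⟨v, hv, hφv⟩ := hmem
  refine ⟨mulL (n + 2) L v, mulL_mem hL hv, ?_⟩
  show phiK n Φ (mulL (n + 2) L v) = ((mulLres n b L hL d) ⟨w, hw⟩ : Fin n → MvPolynomial (Fin 3) K)
  have : phiK n Φ (mulL (n + 2) L v) = L • phiK n Φ v := by
    simp [phiK, mulL_apply]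
  rw [this, hφv]
  rfl

/-- The map induced by multiplication by `L` from `M_{d-1}` to `M_d`,
where `M = coker φ`. -/
def mulLmap (n : ℕ) (a : Fin (n + 2) → ℤ) (b : Fin n → ℤ)
    (Φ : Matrix (Fin n) (Fin (n + 2)) (MvPolynomial (Fin 3) K))
    (L : MvPolynomial (Fin 3) K) (hL : homog L 1) (d : ℤ) :
    Md n a b Φ (d - 1) →ₗ[K] Md n a b Φ d :=
  Submodule.mapQ (MdSub n a b Φ (d - 1)) (MdSub n a b Φ d) (mulLres n b L hL d)
    (mulLres_comap n a b Φ L hL d)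

/-- The linear form with coefficient vector `c`. -/
def linform (c : Fin 3 → K) : MvPolynomial (Fin 3) K := ∑ i, C (c i) * X i

lemma homog_linform (c : Fin 3 → K) : homog (linform c) 1 := by
  rw [homog, ← mem_weightedHomogeneousSubmodule]
  refine sum_mem fun i _ => ?_
  rw [mem_weightedHomogeneousSubmodule]
  simpa using (isWeightedHomogeneous_C (fun _ : Fin 3 => (1 : ℤ)) (c i)).mul
    (isWeightedHomogeneous_X K (fun _ : Fin 3 => (1 : ℤ)) i)

/-- Finite length of `coker φ`: all sufficiently high graded pieces vanish. -/
def FiniteColength (n : ℕ) (a : Fin (n + 2) → ℤ) (b : Fin n → ℤ)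
    (Φ : Matrix (Fin n) (Fin (n + 2)) (MvPolynomial (Fin 3) K)) : Prop :=
  ∃ D : ℤ, ∀ d : ℤ, D ≤ d →
    degPiece (K := K) n b d ≤ Submodule.map (phiK n Φ) (degPiece (n + 2) a d)

end

/-!
Put `c = ∑ aᵢ - ∑ bⱼ`. Some power of each variable annihilates `M`, hence another one lies in the
ideal of maximal minors of `Φ`. This ideal therefore contains a regular sequence of length three,
and the Buchsbaum–Rim complex
`0 → ⊕ R(bⱼ - c) → ⊕ R(aᵢ - c) → ⊕ R(-aᵢ) → ⊕ R(-bⱼ) → M → 0` is exact.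

Reading off dimensions, the first difference of the Hilbert function of `M` at `s - 1` is
`∑ ramp s r (bⱼ) - ∑ ramp s r (aᵢ)` with `r = c - s`, where `ramp s r` is piecewise linear and
vanishes between `s` and `r`. Exchanging `s` and `r` changes the sign of this expression, so it
suffices to see that it is nonnegative for `s ≤ r`.

That is a matter of comparing, for each `t`, how many `aᵢ` and how many `bⱼ` are at most `t`. The
rows of degree `> t` of `Φ` vanish outside the columns of degree `> t`. If this block has fewer than
two columns more than rows, then, padded by zero columns, it has an exact Buchsbaum–Rim complex with
a zero column in its matrix, which forces the block to be surjective. By Nakayama it then has at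
least as many columns as rows in every degree. So there are never more than two `aᵢ` in excess of
the `bⱼ` up to `t`, and once the `aᵢ` are in excess they remain so.
-/

open RingTheory.Sequence Matrix
open scoped Pointwise

/-! ### Regular sequences and acyclicity -/

section RegularSequence

variable {R M : Type*} [CommRing R] [AddCommGroup M] [Module R M]

lemma isWeaklyRegular_of_flat [Module.Flat R M] {rs : List R} (h : IsWeaklyRegular R rs) :
    IsWeaklyRegular M rs :=
  (LinearEquiv.isWeaklyRegular_congr (TensorProduct.rid R M) rs).1 h.isWeaklyRegular_lTensor

lemma exists_eq_smul_of_smul_eq_smul {f g : R} (h : IsWeaklyRegular M [f, g]) {s t : M}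
    (hst : g • s = f • t) : ∃ s', s = f • s' := by
  have hg := ((isWeaklyRegular_append_iff M [f] [g]).1 h).2
  rw [isWeaklyRegular_singleton_iff, isSMulRegular_quotient_iff_mem_of_smul_mem] at hg
  have hs := hg s (by
    rw [Ideal.ofList_singleton, Submodule.ideal_span_singleton_smul,
      Submodule.mem_smul_pointwise_iff_exists]
    exact ⟨t, trivial, hst.symm⟩)
  rw [Ideal.ofList_singleton, Submodule.ideal_span_singleton_smul,
    Submodule.mem_smul_pointwise_iff_exists] at hs
  obtain ⟨s', -, rfl⟩ := hs
  exact ⟨s', rfl⟩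

lemma exists_eq_smul_add_smul_of_smul_eq_add {f g h : R} (H : IsWeaklyRegular M [f, g, h])
    {p q o : M} (hpqo : h • p = f • q + g • o) : ∃ p₁ p₂, p = f • p₁ + g • p₂ := by
  have mem_iff (x : M) : x ∈ Ideal.ofList [f, g] • (⊤ : Submodule R M) ↔
      ∃ x₁ x₂, x = f • x₁ + g • x₂ := by
    rw [Ideal.ofList_cons_smul, Ideal.ofList_singleton, Submodule.ideal_span_singleton_smul,
      Submodule.mem_sup]
    simp only [Submodule.mem_smul_pointwise_iff_exists, Submodule.mem_top, true_and,
      exists_exists_eq_and, @eq_comm _ x]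
  have hh := ((isWeaklyRegular_append_iff M [f, g] [h]).1 H).2
  rw [isWeaklyRegular_singleton_iff, isSMulRegular_quotient_iff_mem_of_smul_mem] at hh
  exact (mem_iff p).1 (hh p ((mem_iff _).2 ⟨q, o, hpqo⟩))

end RegularSequence

section Acyclicity

variable {R L₁ L₂ L₃ : Type*} [CommRing R] [AddCommGroup L₁] [Module R L₁] [AddCommGroup L₂]
  [Module R L₂] [AddCommGroup L₃] [Module R L₃] {d₃ : L₃ →ₗ[R] L₂} {d₂ : L₂ →ₗ[R] L₁}

lemma mem_range_of_smul_mem_range {f g : R} (hd₃ : Function.Injective d₃)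
    (h₃ : IsWeaklyRegular L₃ [f, g]) (h₂ : IsSMulRegular L₂ f) {w : L₂}
    (hf : f • w ∈ LinearMap.range d₃) (hg : g • w ∈ LinearMap.range d₃) :
    w ∈ LinearMap.range d₃ := by
  obtain ⟨s, hs⟩ := hf
  obtain ⟨t, ht⟩ := hg
  have hst : g • s = f • t := hd₃ (by rw [map_smul, map_smul, hs, ht, smul_comm])
  obtain ⟨s', rfl⟩ := exists_eq_smul_of_smul_eq_smul h₃ hst
  exact ⟨s', h₂ (by simpa using hs)⟩

lemma mem_range_of_smul_mem_range_of_exact {f g h : R} (hd₃ : Function.Injective d₃)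
    (hex : Function.Exact d₃ d₂) (h₃ : IsWeaklyRegular L₃ [f, g, h])
    (h₂ : IsWeaklyRegular L₂ [f, g]) (h₁ : IsSMulRegular L₁ f) {x : L₁}
    (hf : f • x ∈ LinearMap.range d₂) (hg : g • x ∈ LinearMap.range d₂)
    (hh : h • x ∈ LinearMap.range d₂) : x ∈ LinearMap.range d₂ := by
  obtain ⟨s, hs⟩ := hf
  obtain ⟨t, ht⟩ := hg
  obtain ⟨r, hr⟩ := hh
  obtain ⟨p, hp⟩ := (hex (g • s - f • t)).1 (by
    rw [map_sub, map_smul, map_smul, hs, ht, smul_comm, sub_self])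
  obtain ⟨q, hq⟩ := (hex (h • s - f • r)).1 (by
    rw [map_sub, map_smul, map_smul, hs, hr, smul_comm, sub_self])
  obtain ⟨o, ho⟩ := (hex (h • t - g • r)).1 (by
    rw [map_sub, map_smul, map_smul, ht, hr, smul_comm, sub_self])
  have hpqo : h • p = f • (-o) + g • q := hd₃ (by
    rw [map_add, map_smul, map_smul, map_smul, map_neg, hp, hq, ho]
    module)
  obtain ⟨p₁, p₂, rfl⟩ := exists_eq_smul_add_smul_of_smul_eq_add h₃ hpqo
  have hst : g • (s - d₃ p₂) = f • (t + d₃ p₁) := by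
    rw [map_add, map_smul, map_smul] at hp
    rw [smul_sub, smul_add, sub_eq_iff_eq_add, add_assoc, hp, add_sub_cancel]
  obtain ⟨s', hs'⟩ := exists_eq_smul_of_smul_eq_smul h₂ hst
  refine ⟨s', h₁ ?_⟩
  change f • d₂ s' = f • x
  rw [← map_smul, ← hs', map_sub, hex.apply_apply_eq_zero, sub_zero, hs]

end Acyclicity

section MonomialRegularSequence

variable {σ R : Type*} [CommRing R]

lemma mem_span_X_pow_of_X_pow_mul_mem {m : σ → ℕ} {s : Set σ} {k : σ} (hk : k ∉ s)
    {p : MvPolynomial σ R} (hp : X k ^ m k * p ∈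
      Ideal.span ((fun i => (X i : MvPolynomial σ R) ^ m i) '' s)) :
    p ∈ Ideal.span ((fun i => (X i : MvPolynomial σ R) ^ m i) '' s) := by
  classical
  have hspan : (fun i => (X i : MvPolynomial σ R) ^ m i) '' s =
      (fun c => monomial c (1 : R)) '' ((fun i => Finsupp.single i (m i)) '' s) := by
    simp only [Set.image_image, X_pow_eq_monomial]
  rw [hspan, mem_ideal_span_monomial_image] at hp ⊢
  intro c hc
  obtain ⟨_, ⟨i, hi, rfl⟩, hle⟩ := hp (Finsupp.single k (m k) + c) (by
    rwa [mem_support_iff, X_pow_eq_monomial, coeff_monomial_mul, one_mul, ← mem_support_iff])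
  have hik : i ≠ k := fun h => hk (h ▸ hi)
  refine ⟨_, ⟨i, hi, rfl⟩, ?_⟩
  rw [Finsupp.single_le_iff] at hle ⊢
  simpa [Finsupp.single_apply, hik.symm] using hle

lemma isWeaklyRegular_map_X_pow (m : σ → ℕ) {l : List σ} (hl : l.Nodup) :
    IsWeaklyRegular (MvPolynomial σ R) (l.map fun i => (X i : MvPolynomial σ R) ^ m i) := by
  rw [isWeaklyRegular_iff]
  intro i hi
  rw [List.length_map] at hi
  rw [isSMulRegular_quotient_iff_mem_of_smul_mem]
  have hideal : Ideal.ofList ((l.map fun i => (X i : MvPolynomial σ R) ^ m i).take i) =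
      Ideal.span ((fun i => (X i : MvPolynomial σ R) ^ m i) '' {j | j ∈ l.take i}) := by
    rw [← List.map_take, Ideal.ofList]
    congr 1
    ext p
    simp only [List.mem_map, Set.mem_ofPred_eq, Set.mem_image]
  rw [hideal, smul_eq_mul, Ideal.mul_top]
  intro p hp
  rw [List.getElem_map, smul_eq_mul] at hp
  refine mem_span_X_pow_of_X_pow_mul_mem ?_ hp
  exact fun hmem => by
    obtain ⟨j, hj, hji⟩ := List.mem_take_iff_getElem.1 hmem
    have := hl.getElem_inj_iff.1 hji
    omega

end MonomialRegularSequence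

/-! ### The Buchsbaum–Rim complex -/

section BuchsbaumRim

variable {R ι κ : Type*}

/-- The square matrix obtained from `Φ` by adding the two rows `u` and `v`; the bijection `e`
says how its rows are indexed. -/
def borderedMatrix (e : κ ≃ ι ⊕ Fin 2) (Φ : Matrix ι κ R) (u v : κ → R) : Matrix κ κ R :=
  (fromRows Φ (of ![u, v])).submatrix e id

lemma borderedMatrix_updateRow_fst [DecidableEq κ] (e : κ ≃ ι ⊕ Fin 2) (Φ : Matrix ι κ R)
    (u v w : κ → R) :
    (borderedMatrix e Φ u v).updateRow (e.symm (Sum.inr 0)) w = borderedMatrix e Φ w v := by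
  ext k l
  obtain ⟨k | k, rfl⟩ := e.symm.surjective k
  · simp [borderedMatrix, updateRow_apply]
  · fin_cases k <;> simp [borderedMatrix, updateRow_apply]

lemma borderedMatrix_updateRow_snd [DecidableEq κ] (e : κ ≃ ι ⊕ Fin 2) (Φ : Matrix ι κ R)
    (u v w : κ → R) :
    (borderedMatrix e Φ u v).updateRow (e.symm (Sum.inr 1)) w = borderedMatrix e Φ u w := by
  ext k l
  obtain ⟨k | k, rfl⟩ := e.symm.surjective k
  · simp [borderedMatrix, updateRow_apply]
  · fin_cases k <;> simp [borderedMatrix, updateRow_apply]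

variable [CommRing R] [Fintype κ]

lemma borderedMatrix_mulVec (e : κ ≃ ι ⊕ Fin 2) (Φ : Matrix ι κ R) (u v x : κ → R) :
    borderedMatrix e Φ u v *ᵥ x = Sum.elim (Φ *ᵥ x) ![u ⬝ᵥ x, v ⬝ᵥ x] ∘ e := by
  ext k
  obtain ⟨k | k, rfl⟩ := e.symm.surjective k
  · simp [borderedMatrix, mulVec]
  · fin_cases k <;> simp [borderedMatrix, mulVec]

lemma vecMul_borderedMatrix [Fintype ι] (e : κ ≃ ι ⊕ Fin 2) (Φ : Matrix ι κ R)
    (u v x : κ → R) :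
    x ᵥ* borderedMatrix e Φ u v = (fun j => x (e.symm (Sum.inl j))) ᵥ* Φ +
      x (e.symm (Sum.inr 0)) • u + x (e.symm (Sum.inr 1)) • v := by
  ext k
  simp only [vecMul, dotProduct, Pi.add_apply, Pi.smul_apply, smul_eq_mul]
  rw [← e.symm.sum_comp, Fintype.sum_sum_type, Fin.sum_univ_two]
  simp [borderedMatrix, add_assoc]

variable [DecidableEq κ] (e : κ ≃ ι ⊕ Fin 2) (Φ : Matrix ι κ R)

/-- The alternating form `(u, v) ↦ det (Φ with the additional rows u and v)`. -/
def borderedDet : LinearMap.BilinForm R (κ → R) :=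
  LinearMap.mk₂ R (fun u v => (borderedMatrix e Φ u v).det)
    (fun u u' v => by
      simpa [borderedMatrix_updateRow_fst] using
        det_updateRow_add (borderedMatrix e Φ 0 v) (e.symm (Sum.inr 0)) u u')
    (fun c u v => by
      simpa [borderedMatrix_updateRow_fst] using
        det_updateRow_smul (borderedMatrix e Φ 0 v) (e.symm (Sum.inr 0)) c u)
    (fun u v v' => by
      simpa [borderedMatrix_updateRow_snd] using
        det_updateRow_add (borderedMatrix e Φ u 0) (e.symm (Sum.inr 1)) v v')
    (fun c u v => by
      simpa [borderedMatrix_updateRow_snd] using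
        det_updateRow_smul (borderedMatrix e Φ u 0) (e.symm (Sum.inr 1)) c v)

lemma borderedDet_apply (u v : κ → R) : borderedDet e Φ u v = (borderedMatrix e Φ u v).det :=
  rfl

lemma borderedDet_isAlt : (borderedDet e Φ).IsAlt := fun u =>
  det_zero_of_row_eq (i := e.symm (Sum.inr 0)) (j := e.symm (Sum.inr 1)) (by simp)
    (by ext l; simp [borderedMatrix])

lemma borderedDet_swap (u v : κ → R) : borderedDet e Φ u v = -borderedDet e Φ v u :=
  (LinearMap.IsAlt.neg (borderedDet_isAlt e Φ) v u).symm

lemma borderedDet_row_left (j : ι) (v : κ → R) : borderedDet e Φ (Φ j) v = 0 :=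
  det_zero_of_row_eq (i := e.symm (Sum.inl j)) (j := e.symm (Sum.inr 0)) (by simp)
    (by ext l; simp [borderedMatrix])

/-- The matrix of the middle differential of the Buchsbaum–Rim complex
`0 → (ι → R) → (κ → R) → (κ → R) → (ι → R)`, whose outer differentials are `Φᵀ` and `Φ`.
Its entries are, up to sign, the maximal minors of `Φ`. -/
def buchsbaumRimMatrix : Matrix κ κ R :=
  LinearMap.toMatrix₂' R (borderedDet e Φ)

lemma buchsbaumRimMatrix_apply (i k : κ) :
    buchsbaumRimMatrix e Φ i k =
      (borderedMatrix e Φ (Pi.single i 1) (Pi.single k 1)).det := by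
  rw [buchsbaumRimMatrix, LinearMap.toMatrix₂'_apply, borderedDet_apply]

lemma dotProduct_buchsbaumRimMatrix_mulVec (u v : κ → R) :
    u ⬝ᵥ buchsbaumRimMatrix e Φ *ᵥ v = borderedDet e Φ u v := by
  rw [← toLinearMap₂'_apply', buchsbaumRimMatrix, toLinearMap₂'_toMatrix']

lemma transpose_buchsbaumRimMatrix :
    (buchsbaumRimMatrix e Φ)ᵀ = -buchsbaumRimMatrix e Φ := by
  ext i k
  simp only [transpose_apply, Matrix.neg_apply, buchsbaumRimMatrix, LinearMap.toMatrix₂'_apply]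
  exact borderedDet_swap e Φ _ _

lemma mul_buchsbaumRimMatrix : Φ * buchsbaumRimMatrix e Φ = 0 := by
  refine ext_of_mulVec_single fun k => funext fun j => ?_
  rw [← mulVec_mulVec, zero_mulVec]
  exact (dotProduct_buchsbaumRimMatrix_mulVec e Φ _ _).trans (borderedDet_row_left e Φ j _)

lemma buchsbaumRimMatrix_mul_transpose : buchsbaumRimMatrix e Φ * Φᵀ = 0 := by
  rw [← transpose_inj, transpose_mul, transpose_transpose, transpose_buchsbaumRimMatrix,
    Matrix.mul_neg, mul_buchsbaumRimMatrix, neg_zero, transpose_zero]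

/-! Every `borderedDet e Φ u v` kills the homology of the Buchsbaum–Rim complex: the homotopies
come from the adjugate of `borderedMatrix e Φ u v`. -/

lemma borderedDet_smul_mem_range_mulVecLin (u v : κ → R) (y : ι → R) :
    borderedDet e Φ u v • y ∈ LinearMap.range Φ.mulVecLin := by
  refine ⟨cramer (borderedMatrix e Φ u v) (Sum.elim y 0 ∘ e), funext fun j => ?_⟩
  have h := congrFun (mulVec_cramer (borderedMatrix e Φ u v) (Sum.elim y 0 ∘ e))
    (e.symm (Sum.inl j))
  rw [borderedMatrix_mulVec] at h
  simpa [borderedDet_apply] using h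

lemma borderedDet_smul_mem_range_buchsbaumRimMatrix (u v : κ → R) {x : κ → R}
    (hx : Φ *ᵥ x = 0) :
    borderedDet e Φ u v • x ∈ LinearMap.range (buchsbaumRimMatrix e Φ).mulVecLin := by
  have : Finite ι := .of_injective _ (e.symm.injective.comp Sum.inl_injective)
  have := Fintype.ofFinite ι
  refine ⟨(u ⬝ᵥ x) • v - (v ⬝ᵥ x) • u, funext fun i => ?_⟩
  have hadj : borderedDet e Φ u v • x =
      (borderedMatrix e Φ u v).adjugate *ᵥ (Sum.elim 0 ![u ⬝ᵥ x, v ⬝ᵥ x] ∘ e) := by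
    rw [← hx, ← borderedMatrix_mulVec, mulVec_mulVec, adjugate_mul, smul_mulVec, one_mulVec,
      borderedDet_apply]
  have hsum (c d : R) :
      ((borderedMatrix e Φ u v).adjugate *ᵥ (Sum.elim 0 ![c, d] ∘ e)) i =
        borderedDet e Φ (Pi.single i 1) v * c + borderedDet e Φ u (Pi.single i 1) * d := by
    simp only [mulVec, dotProduct]
    rw [← e.symm.sum_comp, Fintype.sum_sum_type, Fin.sum_univ_two]
    simp [adjugate_apply, borderedMatrix_updateRow_fst, borderedMatrix_updateRow_snd,
      borderedDet_apply]
  have hrow (t : κ → R) :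
      (buchsbaumRimMatrix e Φ *ᵥ t) i = borderedDet e Φ (Pi.single i 1) t := by
    rw [← dotProduct_buchsbaumRimMatrix_mulVec, single_one_dotProduct]
  rw [hadj, hsum, mulVecLin_apply, hrow, map_sub, map_smul, map_smul,
    borderedDet_swap e Φ (Pi.single i 1) u, smul_eq_mul, smul_eq_mul]
  ring

lemma borderedDet_smul_mem_range_transpose [Fintype ι] (u v : κ → R) {w : κ → R}
    (hw : buchsbaumRimMatrix e Φ *ᵥ w = 0) :
    borderedDet e Φ u v • w ∈ LinearMap.range Φᵀ.mulVecLin := by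
  have hB (u : κ → R) : borderedDet e Φ u w = 0 := by
    rw [← dotProduct_buchsbaumRimMatrix_mulVec, hw, dotProduct_zero]
  have h := mulVec_cramer (borderedMatrix e Φ u v)ᵀ w
  rw [mulVec_transpose, vecMul_borderedMatrix] at h
  simp only [cramer_transpose_apply, borderedMatrix_updateRow_fst, borderedMatrix_updateRow_snd,
    ← borderedDet_apply, hB, borderedDet_swap e Φ w v, det_transpose, neg_zero, zero_smul,
    add_zero] at h
  exact ⟨_, (mulVec_transpose _ _).trans h⟩

/-- The ideal generated by the maximal minors of `Φ`, given as the determinants of all the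
bordered matrices. -/
def maximalMinorsIdeal : Ideal R :=
  Ideal.span (Set.range fun p : (κ → R) × (κ → R) => borderedDet e Φ p.1 p.2)

variable {e Φ}

lemma smul_mem_of_mem_maximalMinorsIdeal {N : Type*} [AddCommGroup N] [Module R N]
    {L : Submodule R N} {x : N} (h : ∀ u v, borderedDet e Φ u v • x ∈ L) {r : R}
    (hr : r ∈ maximalMinorsIdeal e Φ) : r • x ∈ L := by
  have hle : maximalMinorsIdeal e Φ ≤ L.comap (LinearMap.toSpanSingleton R N x) :=
    Submodule.span_le.2 (Set.range_subset_iff.2 fun p => h p.1 p.2)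
  exact hle hr

lemma det_submatrix_mem_maximalMinorsIdeal_of_injective [Fintype ι] [DecidableEq ι] {p : ι → κ}
    (hp : Function.Injective p) :
    (Φ.submatrix id p).det ∈ maximalMinorsIdeal e Φ := by
  have hcard : Fintype.card (Fin 2) = Fintype.card ((Set.range p)ᶜ : Set κ) := by
    rw [Fintype.card_compl_set, Set.card_range_of_injective hp, Fintype.card_congr e]
    simp
  let τ : ι ⊕ Fin 2 ≃ κ :=
    ((Equiv.ofInjective p hp).sumCongr (Fintype.equivOfCardEq hcard)).trans
      (Equiv.Set.sumCompl (Set.range p))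
  have hτ (j : ι) : τ (Sum.inl j) = p j := by simp [τ]
  set B := borderedMatrix e Φ (Pi.single (τ (Sum.inr 0)) 1) (Pi.single (τ (Sum.inr 1)) 1)
  have hblocks : B.submatrix e.symm τ =
      fromBlocks (Φ.submatrix id p) (Φ.submatrix id fun k => τ (Sum.inr k)) 0 1 := by
    ext (k | k) (l | l)
    · simp [B, borderedMatrix, hτ]
    · simp [B, borderedMatrix]
    · fin_cases k <;> simp [B, borderedMatrix]
    · fin_cases k <;> fin_cases l <;> simp [B, borderedMatrix]
  have hperm : B.submatrix e.symm τ = (B.submatrix e.symm e.symm).submatrix id (τ.trans e) := by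
    ext
    simp
  have hdet : (Φ.submatrix id p).det = Equiv.Perm.sign (τ.trans e) * B.det := by
    rw [← det_submatrix_equiv_self e.symm B, ← det_permute', ← hperm, hblocks,
      det_fromBlocks_zero₂₁, det_one, mul_one]
  rw [hdet]
  exact Ideal.mul_mem_left _ _ (Ideal.subset_span ⟨(_, _), rfl⟩)

lemma det_submatrix_mem_maximalMinorsIdeal [Fintype ι] [DecidableEq ι] (p : ι → κ) :
    (Φ.submatrix id p).det ∈ maximalMinorsIdeal e Φ := by
  by_cases hp : Function.Injective p
  · exact det_submatrix_mem_maximalMinorsIdeal_of_injective hp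
  · obtain ⟨i, j, hpij, hij⟩ := Function.not_injective_iff.1 hp
    rw [det_zero_of_column_eq hij fun k => by simp [hpij]]
    exact zero_mem _

end BuchsbaumRim

section CokerAnnihilator

variable {R ι κ : Type*} [CommRing R] [Fintype κ]

/-- The annihilator of the cokernel of `Φ : (κ → R) → (ι → R)`. -/
def cokerAnnihilator (Φ : Matrix ι κ R) : Ideal R :=
  (LinearMap.range Φ.mulVecLin).colon Set.univ

lemma mem_cokerAnnihilator {Φ : Matrix ι κ R} {f : R} :
    f ∈ cokerAnnihilator Φ ↔ ∀ y, f • y ∈ LinearMap.range Φ.mulVecLin := by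
  simp [cokerAnnihilator, Submodule.mem_colon]

lemma cokerAnnihilator_le_fromCols_zero {ρ : Type*} [Fintype ρ] (Φ : Matrix ι κ R) :
    cokerAnnihilator Φ ≤ cokerAnnihilator (fromCols Φ (0 : Matrix ι ρ R)) := by
  intro f hf
  rw [mem_cokerAnnihilator] at hf ⊢
  intro y
  obtain ⟨x, hx⟩ := hf y
  refine ⟨Sum.elim x 0, ?_⟩
  rw [← hx]
  simp

lemma cokerAnnihilator_le_toBlock {Φ : Matrix ι κ R} (p : ι → Prop) (q : κ → Prop)
    [DecidablePred q] (h : ∀ j i, p j → ¬ q i → Φ j i = 0) :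
    cokerAnnihilator Φ ≤ cokerAnnihilator (Φ.toBlock p q) := by
  classical
  intro f hf
  rw [mem_cokerAnnihilator] at hf ⊢
  intro y
  obtain ⟨x, hx⟩ := hf fun j => if hj : p j then y ⟨j, hj⟩ else 0
  refine ⟨fun i => x i, funext fun j => ?_⟩
  have hxj := congrFun hx j
  simp only [Pi.smul_apply, dif_pos j.2, mulVecLin_apply, mulVec, dotProduct] at hxj ⊢
  rw [← hxj, ← Fintype.sum_subtype_add_sum_subtype q]
  have hzero (i : {i // ¬ q i}) : Φ j i = 0 := h j i j.2 i.2
  simp [toBlock_apply, hzero]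

lemma det_mul_eq_sum_det_submatrix [Fintype ι] [DecidableEq ι] (M : Matrix ι κ R)
    (N : Matrix κ ι R) :
    (M * N).det = ∑ p : ι → κ, (∏ i, N (p i) i) * (M.submatrix id p).det := by
  have hrow : (M * N)ᵀ = fun j => ∑ i, N i j • Mᵀ i := by
    ext j k
    simp [mul_apply, mul_comm]
  have hdet : (M * N).det = detRowAlternating.toMultilinearMap fun j => ∑ i, N i j • Mᵀ i := by
    rw [← det_transpose, hrow]
    rfl
  rw [hdet, MultilinearMap.map_sum]
  refine Finset.sum_congr rfl fun p _ => ?_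
  rw [MultilinearMap.map_smul_univ, smul_eq_mul, ← det_transpose (M.submatrix id p)]
  rfl

variable [Fintype ι]

lemma pow_card_mem_maximalMinorsIdeal [DecidableEq κ] (e : κ ≃ ι ⊕ Fin 2) {Φ : Matrix ι κ R}
    {f : R} (hf : f ∈ cokerAnnihilator Φ) : f ^ Fintype.card ι ∈ maximalMinorsIdeal e Φ := by
  classical
  choose S hS using fun j => mem_cokerAnnihilator.1 hf (Pi.single j 1)
  have hmul : Φ * (of S)ᵀ = f • (1 : Matrix ι ι R) := by
    ext i j
    simpa [mulVec, dotProduct, mul_apply, one_apply, Pi.single_apply] using congrFun (hS j) i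
  have hdet : f ^ Fintype.card ι = (Φ * (of S)ᵀ).det := by rw [hmul, det_smul, det_one, mul_one]
  rw [hdet, det_mul_eq_sum_det_submatrix]
  exact Ideal.sum_mem _ fun p _ =>
    Ideal.mul_mem_left _ _ (det_submatrix_mem_maximalMinorsIdeal p)

lemma transpose_mulVecLin_injective {Φ : Matrix ι κ R} {f : R} (hf : f ∈ cokerAnnihilator Φ)
    (hreg : IsSMulRegular R f) : Function.Injective Φᵀ.mulVecLin := by
  classical
  refine (injective_iff_map_eq_zero _).2 fun t ht => funext fun j => hreg ?_
  obtain ⟨x, hx⟩ := mem_cokerAnnihilator.1 hf (Pi.single j 1)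
  rw [mulVecLin_apply, mulVec_transpose] at ht
  calc f • t j = t ⬝ᵥ (f • Pi.single j 1) := by simp
    _ = 0 := by rw [← hx, mulVecLin_apply, dotProduct_mulVec, ht, zero_dotProduct]
    _ = f • (0 : ι → R) j := by simp

end CokerAnnihilator

section Exactness

variable {R ι κ : Type*} [CommRing R] [Fintype κ] [DecidableEq κ]
  {e : κ ≃ ι ⊕ Fin 2} {Φ : Matrix ι κ R} {f g h : R}

/-- Exactness makes the `k`-th basis vector the image of some `t` under the middle differential, and
its `k`-th coordinate `1` is then a combination of maximal minors. -/
lemma mulVecLin_surjective_of_col_eq_zero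
    (hex : Function.Exact (buchsbaumRimMatrix e Φ).mulVecLin Φ.mulVecLin) {k : κ}
    (hk : Φ.col k = 0) : Function.Surjective Φ.mulVecLin := by
  obtain ⟨t, ht⟩ := (hex (Pi.single k 1)).1 (by simp [hk])
  have hdet : borderedDet e Φ (Pi.single k 1) t = 1 := by
    rw [← dotProduct_buchsbaumRimMatrix_mulVec, ← mulVecLin_apply, ht]
    simp
  intro y
  simpa [hdet] using borderedDet_smul_mem_range_mulVecLin e Φ (Pi.single k 1) t y

variable [Fintype ι]

lemma exact_transpose_buchsbaumRimMatrix (hinj : Function.Injective Φᵀ.mulVecLin)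
    (hreg : IsWeaklyRegular R [f, g]) (hf : f ∈ maximalMinorsIdeal e Φ)
    (hg : g ∈ maximalMinorsIdeal e Φ) :
    Function.Exact Φᵀ.mulVecLin (buchsbaumRimMatrix e Φ).mulVecLin := by
  refine fun w => ⟨fun hw => ?_, ?_⟩
  · have hmem {r : R} (hr : r ∈ maximalMinorsIdeal e Φ) :
        r • w ∈ LinearMap.range Φᵀ.mulVecLin :=
      smul_mem_of_mem_maximalMinorsIdeal
        (fun u v => borderedDet_smul_mem_range_transpose e Φ u v hw) hr
    exact mem_range_of_smul_mem_range hinj (isWeaklyRegular_of_flat hreg)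
      ((isWeaklyRegular_cons_iff _ _ _).1 (isWeaklyRegular_of_flat hreg)).1 (hmem hf) (hmem hg)
  · rintro ⟨t, rfl⟩
    rw [mulVecLin_apply, mulVecLin_apply, mulVec_mulVec, buchsbaumRimMatrix_mul_transpose,
      zero_mulVec]

lemma exact_buchsbaumRimMatrix_mulVecLin (hinj : Function.Injective Φᵀ.mulVecLin)
    (hreg : IsWeaklyRegular R [f, g, h]) (hf : f ∈ maximalMinorsIdeal e Φ)
    (hg : g ∈ maximalMinorsIdeal e Φ) (hh : h ∈ maximalMinorsIdeal e Φ) :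
    Function.Exact (buchsbaumRimMatrix e Φ).mulVecLin Φ.mulVecLin := by
  have hreg₂ : IsWeaklyRegular R [f, g] := ((isWeaklyRegular_append_iff R [f, g] [h]).1 hreg).1
  refine fun x => ⟨fun hx => ?_, ?_⟩
  · have hmem {r : R} (hr : r ∈ maximalMinorsIdeal e Φ) :
        r • x ∈ LinearMap.range (buchsbaumRimMatrix e Φ).mulVecLin :=
      smul_mem_of_mem_maximalMinorsIdeal
        (fun u v => borderedDet_smul_mem_range_buchsbaumRimMatrix e Φ u v hx) hr
    exact mem_range_of_smul_mem_range_of_exact hinj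
      (exact_transpose_buchsbaumRimMatrix hinj hreg₂ hf hg) (isWeaklyRegular_of_flat hreg)
      (isWeaklyRegular_of_flat hreg₂)
      ((isWeaklyRegular_cons_iff _ _ _).1 (isWeaklyRegular_of_flat hreg)).1
      (hmem hf) (hmem hg) (hmem hh)
  · rintro ⟨t, rfl⟩
    rw [mulVecLin_apply, mulVecLin_apply, mulVec_mulVec, mul_buchsbaumRimMatrix, zero_mulVec]

end Exactness

section ThreeVariables

variable {K ι κ : Type*} [CommRing K] [Fintype ι] [Fintype κ]
  {Φ : Matrix ι κ (MvPolynomial (Fin 3) K)} {N : ℕ}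

lemma exact_buchsbaumRim_of_X_pow_mem_cokerAnnihilator [DecidableEq κ] (e : κ ≃ ι ⊕ Fin 2)
    (hN : ∀ k, X k ^ N ∈ cokerAnnihilator Φ) :
    Function.Injective Φᵀ.mulVecLin ∧
      Function.Exact Φᵀ.mulVecLin (buchsbaumRimMatrix e Φ).mulVecLin ∧
      Function.Exact (buchsbaumRimMatrix e Φ).mulVecLin Φ.mulVecLin := by
  have hreg (m : ℕ) : IsWeaklyRegular (MvPolynomial (Fin 3) K)
      [(X 0 : MvPolynomial (Fin 3) K) ^ m, X 1 ^ m, X 2 ^ m] := by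
    simpa only [List.map_cons, List.map_nil] using
      isWeaklyRegular_map_X_pow (R := K) (fun _ : Fin 3 => m) (l := [0, 1, 2]) (by decide)
  have hJ (k : Fin 3) : X k ^ (N * Fintype.card ι) ∈ maximalMinorsIdeal e Φ := by
    rw [pow_mul]
    exact pow_card_mem_maximalMinorsIdeal e (hN k)
  have hinj := transpose_mulVecLin_injective (hN 0) ((isWeaklyRegular_cons_iff _ _ _).1 (hreg N)).1
  exact ⟨hinj, exact_transpose_buchsbaumRimMatrix hinj
      ((isWeaklyRegular_append_iff _ [_, _] [_]).1 (hreg _)).1 (hJ 0) (hJ 1),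
    exact_buchsbaumRimMatrix_mulVecLin hinj (hreg _) (hJ 0) (hJ 1) (hJ 2)⟩

/-- Adding zero columns reduces this to `mulVecLin_surjective_of_col_eq_zero`. -/
lemma mulVecLin_surjective_of_card_lt (hcard : Fintype.card κ < Fintype.card ι + 2)
    (hN : ∀ k, X k ^ N ∈ cokerAnnihilator Φ) : Function.Surjective Φ.mulVecLin := by
  classical
  obtain ⟨r, hr⟩ := Nat.exists_eq_add_of_lt hcard
  let e : κ ⊕ Fin (r + 1) ≃ ι ⊕ Fin 2 := Fintype.equivOfCardEq (by simp; omega)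
  let Ψ := fromCols Φ (0 : Matrix ι (Fin (r + 1)) (MvPolynomial (Fin 3) K))
  have hΨ := (exact_buchsbaumRim_of_X_pow_mem_cokerAnnihilator e (Φ := Ψ) fun k =>
    cokerAnnihilator_le_fromCols_zero Φ (hN k)).2.2
  have hsurj : Function.Surjective Ψ.mulVecLin :=
    mulVecLin_surjective_of_col_eq_zero hΨ (k := Sum.inr 0) (by ext; simp [Ψ])
  intro y
  obtain ⟨x, hx⟩ := hsurj y
  exact ⟨x ∘ Sum.inl, by rw [← hx]; simp [Ψ, fromCols_mulVec]⟩

end ThreeVariables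

/-! ### Graded pieces -/

section WeightedHomogeneous

variable {R σ M ι κ : Type*} [CommRing R] [AddCommGroup M] {w : σ → M}

lemma constantCoeff_eq_zero_of_isWeightedHomogeneous {p : MvPolynomial σ R} {d : M}
    (hp : IsWeightedHomogeneous w p d) (hd : d ≠ 0) : constantCoeff p = 0 := by
  rw [constantCoeff_eq]
  exact hp.coeff_eq_zero 0 (by simpa using hd.symm)

lemma weightedHomogeneousComponent_add_mul {p : MvPolynomial σ R} {d : M}
    (hp : IsWeightedHomogeneous w p d) (e : M) (q : MvPolynomial σ R) :
    weightedHomogeneousComponent w (d + e) (p * q) = p * weightedHomogeneousComponent w e q := by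
  classical
  let _ := weightedGradedAlgebra R w
  have h := DirectSum.coe_decompose_mul_add_of_left_mem (weightedHomogeneousSubmodule R w)
    (j := e) (b := q) hp
  exact (decompose'_apply R w (p * q) (d + e)).symm.trans
    (h.trans (congrArg (p * ·) (decompose'_apply R w q e)))

lemma isWeightedHomogeneous_det [Fintype ι] [DecidableEq ι] {B : Matrix ι ι (MvPolynomial σ R)}
    {α β : ι → M} (hB : ∀ j i, IsWeightedHomogeneous w (B j i) (α i - β j)) :
    IsWeightedHomogeneous w B.det (∑ i, α i - ∑ j, β j) := by
  rw [det_apply]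
  refine IsWeightedHomogeneous.sum _ _ _ fun τ _ => ?_
  have hτ := IsWeightedHomogeneous.prod Finset.univ (fun i => B (τ i) i) _ fun i _ => hB (τ i) i
  rw [Finset.sum_sub_distrib, Equiv.sum_comp τ β] at hτ
  exact (weightedHomogeneousSubmodule R w _).smul_of_tower_mem _ hτ

lemma isWeightedHomogeneous_piSingle [DecidableEq ι] {p : MvPolynomial σ R} {d : M} {i : ι}
    {α : ι → M} (hp : IsWeightedHomogeneous w p (d - α i)) (l : ι) :
    IsWeightedHomogeneous w ((Pi.single i p : ι → MvPolynomial σ R) l) (d - α l) := by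
  obtain rfl | hl := eq_or_ne l i
  · rwa [Pi.single_eq_same]
  · rw [Pi.single_eq_of_ne hl]
    exact isWeightedHomogeneous_zero _ _ _

lemma isWeightedHomogeneous_mulVec [Fintype κ] {Ψ : Matrix ι κ (MvPolynomial σ R)}
    {α : κ → M} {β : ι → M} (hΨ : ∀ j i, IsWeightedHomogeneous w (Ψ j i) (α i - β j)) {d : M}
    {x : κ → MvPolynomial σ R} (hx : ∀ i, IsWeightedHomogeneous w (x i) (d - α i)) (j : ι) :
    IsWeightedHomogeneous w ((Ψ *ᵥ x) j) (d - β j) :=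
  IsWeightedHomogeneous.sum _ _ _ fun i _ => by
    simpa only [add_comm (α i - β j), sub_add_sub_cancel] using (hΨ j i).mul (hx i)

lemma mulVec_weightedHomogeneousComponent [Fintype κ] {Ψ : Matrix ι κ (MvPolynomial σ R)}
    {α : κ → M} {β : ι → M} (hΨ : ∀ j i, IsWeightedHomogeneous w (Ψ j i) (α i - β j)) (d : M)
    (x : κ → MvPolynomial σ R) (j : ι) :
    (Ψ *ᵥ fun i => weightedHomogeneousComponent w (d - α i) (x i)) j =
      weightedHomogeneousComponent w (d - β j) ((Ψ *ᵥ x) j) := by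
  simp only [mulVec, dotProduct, map_sum]
  refine Finset.sum_congr rfl fun i _ => ?_
  rw [← weightedHomogeneousComponent_add_mul (hΨ j i), add_comm, sub_add_sub_cancel]

lemma isWeightedHomogeneous_buchsbaumRimMatrix [Fintype ι] [Fintype κ] [DecidableEq κ]
    (e : κ ≃ ι ⊕ Fin 2) {Φ : Matrix ι κ (MvPolynomial σ R)} {α : κ → M} {β : ι → M}
    (hΦ : ∀ j i, IsWeightedHomogeneous w (Φ j i) (α i - β j)) (i k : κ) :
    IsWeightedHomogeneous w (buchsbaumRimMatrix e Φ i k)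
      (∑ l, α l - ∑ j, β j - α k - α i) := by
  have hsingle (k l : κ) : IsWeightedHomogeneous w
      ((Pi.single k 1 : κ → MvPolynomial σ R) l) (α l - α k) := by
    simpa only [zero_sub, neg_sub] using isWeightedHomogeneous_piSingle (i := k) (d := 0)
      (α := fun l => α k - α l) (by simpa using isWeightedHomogeneous_one R w) l
  have hrow (r : ι ⊕ Fin 2) (l : κ) : IsWeightedHomogeneous w
      (fromRows Φ (of ![Pi.single i 1, Pi.single k 1]) r l) (α l - Sum.elim β ![α i, α k] r) := by
    rcases r with j | r
    · exact hΦ j l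
    · fin_cases r
      exacts [hsingle i l, hsingle k l]
  have hdet := isWeightedHomogeneous_det (w := w) (α := α)
    (B := borderedMatrix e Φ (Pi.single i 1) (Pi.single k 1)) fun r l => hrow (e r) l
  rw [Equiv.sum_comp e (Sum.elim β ![α i, α k]), Fintype.sum_sum_type] at hdet
  rw [buchsbaumRimMatrix_apply]
  convert hdet using 1
  simp only [Sum.elim_inl, Sum.elim_inr, Fin.sum_univ_two, cons_val_zero, cons_val_one]
  abel

end WeightedHomogeneous

section StandardGrading

variable (σ R : Type*) [CommSemiring R]

/-- The degree-`e` part of the standard graded polynomial ring, indexed by all integers `e` so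
that twists by arbitrary integers make sense. -/
abbrev standardGradedPart (e : ℤ) : Submodule R (MvPolynomial σ R) :=
  weightedHomogeneousSubmodule R (fun _ : σ => (1 : ℤ)) e

variable {σ} in
lemma weight_one_eq_degree (d : σ →₀ ℕ) :
    Finsupp.weight (fun _ : σ => (1 : ℤ)) d = d.degree := by
  simp [Finsupp.weight_apply, Finsupp.sum, Finsupp.degree_apply]

lemma standardGradedPart_eq_bot {e : ℤ} (he : e < 0) : standardGradedPart σ R e = ⊥ := by
  rw [eq_bot_iff]
  intro p hp
  refine (Submodule.mem_bot R).2 (MvPolynomial.ext _ _ fun d => hp.coeff_eq_zero d ?_)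
  rw [weight_one_eq_degree]
  omega

lemma standardGradedPart_natCast [Fintype σ] [DecidableEq σ] (e : ℕ) :
    standardGradedPart σ R e = AddMonoidAlgebra.supported R R
      (Finset.univ.finsuppAntidiag e : Finset (σ →₀ ℕ)) := by
  rw [standardGradedPart, weightedHomogeneousSubmodule_eq_finsupp_supported]
  congr 1
  ext d
  simp [weight_one_eq_degree, Finsupp.degree_eq_sum, Finset.mem_finsuppAntidiag,
    -Nat.cast_sum]

/-- The monomials of degree `e` form a basis of the degree-`e` part. -/
noncomputable def standardGradedPartEquiv [Fintype σ] [DecidableEq σ] (e : ℕ) :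
    standardGradedPart σ R e ≃ₗ[R] ((Finset.univ.finsuppAntidiag e : Finset (σ →₀ ℕ)) →₀ R) :=
  (LinearEquiv.ofEq _ _ (standardGradedPart_natCast σ R e)).trans
    (AddMonoidAlgebra.supportedEquivFinsupp _)

instance [Finite σ] (e : ℤ) : Module.Finite R (standardGradedPart σ R e) := by
  classical
  cases nonempty_fintype σ
  rcases lt_or_ge e 0 with he | he
  · rw [standardGradedPart_eq_bot σ R he]
    infer_instance
  · lift e to ℕ using he
    exact Module.Finite.equiv (standardGradedPartEquiv σ R e).symm

lemma finrank_standardGradedPart_natCast [StrongRankCondition R] [Fintype σ] (e : ℕ) :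
    Module.finrank R (standardGradedPart σ R e) = (Fintype.card σ).multichoose e := by
  classical
  rw [(standardGradedPartEquiv σ R e).finrank_eq, Module.finrank_finsupp_self, Fintype.card_coe,
    Finset.card_finsuppAntidiag_nat_eq_multichoose, Finset.card_univ]

end StandardGrading

lemma finrank_standardGradedPart_three_sub (R : Type*) [CommSemiring R] [StrongRankCondition R]
    (e : ℤ) :
    (Module.finrank R (standardGradedPart (Fin 3) R e) : ℤ) -
      Module.finrank R (standardGradedPart (Fin 3) R (e - 1)) = max (e + 1) 0 := by
  have := nontrivial_of_invariantBasisNumber R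
  obtain he | rfl | he := lt_trichotomy e 0
  · rw [standardGradedPart_eq_bot _ R he, standardGradedPart_eq_bot _ R (by omega)]
    simp
    omega
  · have h := finrank_standardGradedPart_natCast (Fin 3) R 0
    rw [standardGradedPart_eq_bot _ R (show (0 : ℤ) - 1 < 0 by omega)]
    rw [Nat.cast_zero, Nat.multichoose_zero_right] at h
    simp [h]
  · obtain ⟨m, rfl⟩ := Int.eq_succ_of_zero_lt he
    have hstep : Nat.multichoose 3 (m + 1) = m + 2 + Nat.multichoose 3 m := by
      rw [Nat.multichoose_succ_succ, Nat.multichoose_two]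
    rw [add_sub_cancel_right, ← Nat.cast_succ, finrank_standardGradedPart_natCast,
      finrank_standardGradedPart_natCast, Fintype.card_fin, hstep]
    omega

lemma finrank_map_add_finrank_inf_ker {K V W : Type*} [DivisionRing K] [AddCommGroup V]
    [Module K V] [AddCommGroup W] [Module K W] (L : V →ₗ[K] W) (P : Submodule K V)
    [FiniteDimensional K P] :
    Module.finrank K (P.map L) + Module.finrank K ↥(P ⊓ LinearMap.ker L) = Module.finrank K P := by
  rw [← LinearMap.finrank_range_add_finrank_ker (L.domRestrict P), LinearMap.range_domRestrict,
    LinearMap.ker_domRestrict, ← Submodule.map_comap_subtype, Submodule.finrank_map_subtype_eq]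

section DegPiece

variable {K : Type*} [Field K] {m m' m'' : ℕ}

lemma map_degPiece_le {Ψ : Matrix (Fin m) (Fin m') (MvPolynomial (Fin 3) K)} {α : Fin m' → ℤ}
    {β : Fin m → ℤ} (hΨ : ∀ j i, homog (Ψ j i) (α i - β j)) (d : ℤ) :
    (degPiece m' α d).map (Ψ.mulVecLin.restrictScalars K) ≤ degPiece m β d := by
  rintro _ ⟨x, hx, rfl⟩
  exact mem_degPiece.2 (isWeightedHomogeneous_mulVec hΨ (mem_degPiece.1 hx))

lemma degPiece_inf_ker_eq_map {Ψ₁ : Matrix (Fin m') (Fin m'') (MvPolynomial (Fin 3) K)}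
    {Ψ₂ : Matrix (Fin m) (Fin m') (MvPolynomial (Fin 3) K)} {α : Fin m'' → ℤ} {β : Fin m' → ℤ}
    (hΨ : ∀ j i, homog (Ψ₁ j i) (α i - β j))
    (hexact : Function.Exact Ψ₁.mulVecLin Ψ₂.mulVecLin) (d : ℤ) :
    degPiece m' β d ⊓ LinearMap.ker (Ψ₂.mulVecLin.restrictScalars K) =
      (degPiece m'' α d).map (Ψ₁.mulVecLin.restrictScalars K) := by
  refine le_antisymm ?_ (le_inf (map_degPiece_le hΨ d) ?_)
  · rintro y ⟨hy, hker⟩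
    obtain ⟨x, rfl⟩ := (hexact y).1 hker
    refine ⟨fun i => weightedHomogeneousComponent _ (d - α i) (x i),
      mem_degPiece.2 fun i => weightedHomogeneousComponent_isWeightedHomogeneous _ _, ?_⟩
    ext1 j
    exact (mulVec_weightedHomogeneousComponent hΨ d x j).trans
      (mem_degPiece.1 hy j).weightedHomogeneousComponent_same
  · rintro _ ⟨x, -, rfl⟩
    exact hexact.apply_apply_eq_zero x

/-- A graded piece of a free module is the product of the graded pieces of its summands. -/
def degPieceEquiv (N : ℕ) (a : Fin N → ℤ) (d : ℤ) :
    degPiece (K := K) N a d ≃ₗ[K] ∀ i, standardGradedPart (Fin 3) K (d - a i) where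
  toFun v i := ⟨v.1 i, v.2 i trivial⟩
  invFun v := ⟨fun i => v i, fun i _ => (v i).2⟩
  map_add' _ _ := rfl
  map_smul' _ _ := rfl

instance (N : ℕ) (a : Fin N → ℤ) (d : ℤ) : FiniteDimensional K (degPiece (K := K) N a d) :=
  Module.Finite.equiv (degPieceEquiv N a d).symm

lemma finrank_degPiece_sub (N : ℕ) (a : Fin N → ℤ) (d : ℤ) :
    (Module.finrank K (degPiece (K := K) N a d) : ℤ) -
      Module.finrank K (degPiece (K := K) N a (d - 1)) = ∑ i, max (d + 1 - a i) 0 := by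
  rw [(degPieceEquiv N a d).finrank_eq, (degPieceEquiv N a (d - 1)).finrank_eq,
    Module.finrank_pi_fintype, Module.finrank_pi_fintype, Nat.cast_sum, Nat.cast_sum,
    ← Finset.sum_sub_distrib]
  refine Finset.sum_congr rfl fun i _ => ?_
  rw [sub_right_comm d 1, finrank_standardGradedPart_three_sub, sub_add_eq_add_sub]

variable {n : ℕ} {a : Fin (n + 2) → ℤ} {b : Fin n → ℤ}
  {Φ : Matrix (Fin n) (Fin (n + 2)) (MvPolynomial (Fin 3) K)}

lemma finrank_Md_add_finrank_map (hΦ : ∀ j i, homog (Φ j i) (a i - b j)) (d : ℤ) :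
    Module.finrank K (Md n a b Φ d) +
        Module.finrank K ((degPiece (n + 2) a d).map (Φ.mulVecLin.restrictScalars K)) =
      Module.finrank K (degPiece (K := K) n b d) := by
  rw [← Submodule.finrank_quotient_add_finrank (MdSub n a b Φ d)]
  congr 1
  exact (Submodule.comapSubtypeEquivOfLe (map_degPiece_le hΦ d)).finrank_eq.symm

lemma exists_X_pow_mem_cokerAnnihilator (hfin : FiniteColength n a b Φ) :
    ∃ N : ℕ, ∀ k, X k ^ N ∈ cokerAnnihilator Φ := by
  obtain ⟨D, hD⟩ := hfin
  obtain ⟨B, hB⟩ := (Set.finite_range fun j => D - b j).bddAbove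
  refine ⟨B.toNat, fun k => mem_cokerAnnihilator.2 fun y => ?_⟩
  have hsingle (j : Fin n) : Pi.single j (X k ^ B.toNat) ∈ LinearMap.range Φ.mulVecLin := by
    have hmem : Pi.single j (X k ^ B.toNat) ∈ degPiece (K := K) n b (B.toNat + b j) :=
      mem_degPiece.2 <| isWeightedHomogeneous_piSingle <| by
        simpa using (isWeightedHomogeneous_X K (fun _ : Fin 3 => (1 : ℤ)) k).pow B.toNat
    have hle : D - b j ≤ B := hB ⟨j, rfl⟩
    obtain ⟨x, -, hx⟩ := hD _ (by omega) hmem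
    exact ⟨x, hx⟩
  have hsum : (X k : MvPolynomial (Fin 3) K) ^ B.toNat • y =
      ∑ j, y j • Pi.single j (X k ^ B.toNat) := by
    ext1 j
    simp [Finset.sum_apply, Pi.single_apply, mul_comm]
  rw [hsum]
  exact sum_mem fun j _ => Submodule.smul_mem _ _ (hsingle j)

/-- The Hilbert function is read off the Buchsbaum–Rim resolution
`0 → ⊕ R(b_j - c) → ⊕ R(a_i - c) → ⊕ R(-a_i) → ⊕ R(-b_j) → M → 0`. -/
lemma finrank_Md (hΦ : ∀ j i, homog (Φ j i) (a i - b j)) (hfin : FiniteColength n a b Φ)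
    {c : ℤ} (hc : c = ∑ i, a i - ∑ j, b j) (d : ℤ) :
    (Module.finrank K (Md n a b Φ d) : ℤ) =
      Module.finrank K (degPiece (K := K) n b d) -
        Module.finrank K (degPiece (K := K) (n + 2) a d) +
        Module.finrank K (degPiece (K := K) (n + 2) (fun i => c - a i) d) -
        Module.finrank K (degPiece (K := K) n (fun j => c - b j) d) := by
  let A := buchsbaumRimMatrix finSumFinEquiv.symm Φ
  have hA (i k : Fin (n + 2)) : homog (A i k) (c - a k - a i) :=
    hc ▸ isWeightedHomogeneous_buchsbaumRimMatrix _ hΦ i k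
  have hΦt (i : Fin (n + 2)) (j : Fin n) : homog (Φᵀ i j) (c - b j - (c - a i)) := by
    rw [sub_sub_sub_cancel_left]
    exact hΦ j i
  obtain ⟨N, hN⟩ := exists_X_pow_mem_cokerAnnihilator hfin
  obtain ⟨hinj, hexact₁, hexact₀⟩ :=
    exact_buchsbaumRim_of_X_pow_mem_cokerAnnihilator finSumFinEquiv.symm hN
  have r₀ := finrank_Md_add_finrank_map hΦ d
  have r₁ := finrank_map_add_finrank_inf_ker (Φ.mulVecLin.restrictScalars K)
    (degPiece (n + 2) a d)
  have r₂ := finrank_map_add_finrank_inf_ker (A.mulVecLin.restrictScalars K)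
    (degPiece (n + 2) (fun i => c - a i) d)
  have r₃ := (Submodule.equivMapOfInjective (Φᵀ.mulVecLin.restrictScalars K) hinj
    (degPiece n (fun j => c - b j) d)).finrank_eq
  rw [degPiece_inf_ker_eq_map hA hexact₀] at r₁
  rw [degPiece_inf_ker_eq_map hΦt hexact₁] at r₂
  omega

end DegPiece

/-! ### The degree condition -/

section DegreeCondition

open Finset

lemma card_filter_subtype {ι : Type*} [Fintype ι] (p q : ι → Prop) [DecidablePred p]
    [DecidablePred q] : #{i : {i // p i} | q i} = #{i | p i ∧ q i} := by
  simp only [← Fintype.card_subtype]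
  exact Fintype.card_congr (Equiv.subtypeSubtypeEquivSubtypeInter p q)

lemma card_filter_le_add_card_filter_lt {ι M : Type*} [Fintype ι] [LinearOrder M] (f : ι → M)
    (t : M) : #{i | f i ≤ t} + #{i | t < f i} = Fintype.card ι := by
  simpa only [not_le, card_univ] using
    card_filter_add_card_filter_not (s := univ) fun i => f i ≤ t

lemma card_filter_le_add_card_filter_lt_and_le {ι M : Type*} [Fintype ι] [LinearOrder M]
    (f : ι → M) {t t' : M} (h : t ≤ t') :
    #{i | f i ≤ t} + #{i | t < f i ∧ f i ≤ t'} = #{i | f i ≤ t'} := by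
  rw [← card_filter_add_card_filter_not (s := {i | f i ≤ t'}) fun i => f i ≤ t, filter_filter,
    filter_filter]
  congr 2 <;> ext i <;> simp only [mem_filter, mem_univ, true_and, not_le]
  exacts [⟨fun hi => ⟨hi.trans h, hi⟩, And.right⟩, and_comm]

lemma one_mem_cokerAnnihilator {R ι κ : Type*} [CommRing R] [Fintype κ] {Φ : Matrix ι κ R} :
    1 ∈ cokerAnnihilator Φ ↔ Function.Surjective Φ.mulVecLin := by
  simp only [mem_cokerAnnihilator, one_smul]
  rfl

/-- Nakayama: modulo the variables only the entries of degree zero survive, so a surjection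
restricts to surjections between generators of equal degree. -/
lemma card_filter_le_of_mulVecLin_surjective {R σ M ι κ : Type*} [CommRing R] [Nontrivial R]
    [AddCommGroup M] {w : σ → M} [Fintype ι] [Fintype κ] {Φ : Matrix ι κ (MvPolynomial σ R)}
    {α : κ → M} {β : ι → M} (hΦ : ∀ j i, IsWeightedHomogeneous w (Φ j i) (α i - β j))
    (hsurj : Function.Surjective Φ.mulVecLin) (p : M → Prop) [DecidablePred p] :
    #{j | p (β j)} ≤ #{i | p (α i)} := by
  have hconst : Function.Surjective (Φ.map constantCoeff).mulVecLin := fun y => by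
    obtain ⟨x, hx⟩ := hsurj fun j => C (y j)
    refine ⟨fun i => constantCoeff (x i), funext fun j => ?_⟩
    rw [mulVecLin_apply] at hx ⊢
    rw [← constantCoeff_C σ (y j), ← congrFun hx j, RingHom.map_mulVec]
    rfl
  have hblock := cokerAnnihilator_le_toBlock (Φ := Φ.map constantCoeff) (fun j => p (β j))
    (fun i => p (α i)) (fun j i hj hi => constantCoeff_eq_zero_of_isWeightedHomogeneous (hΦ j i)
      (sub_ne_zero.2 fun h => hi (h ▸ hj))) (one_mem_cokerAnnihilator.2 hconst)
  simpa only [Module.finrank_fintype_fun_eq_card, Fintype.card_subtype] using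
    LinearMap.finrank_le_finrank_of_surjective (one_mem_cokerAnnihilator.1 hblock)

variable {K ι κ : Type*} [CommRing K] [Nontrivial K] [Fintype ι] [Fintype κ]
  {Φ : Matrix ι κ (MvPolynomial (Fin 3) K)} {a : κ → ℤ} {b : ι → ℤ} {N : ℕ}

/-- The rows of degree `> t` vanish outside the columns of degree `> t`. If there are fewer than
two columns more than rows in this block, the block is surjective. -/
lemma card_filter_lt_and_le_of_card_filter_le_lt (hcard : Fintype.card κ = Fintype.card ι + 2)
    (hΦ : ∀ j i, IsWeightedHomogeneous (fun _ : Fin 3 => (1 : ℤ)) (Φ j i) (a i - b j))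
    (hN : ∀ k, X k ^ N ∈ cokerAnnihilator Φ) {t : ℤ} (ht : #{j | b j ≤ t} < #{i | a i ≤ t})
    (p : ℤ → Prop) [DecidablePred p] :
    #{j | t < b j ∧ p (b j)} ≤ #{i | t < a i ∧ p (a i)} := by
  have hzero (j i) (hj : t < b j) (hi : ¬ t < a i) : Φ j i = 0 :=
    (Submodule.mem_bot K).1 <|
      standardGradedPart_eq_bot (Fin 3) K (show a i - b j < 0 by omega) ▸ hΦ j i
  have hblock : Function.Surjective
      (Φ.toBlock (fun j => t < b j) (fun i => t < a i)).mulVecLin := by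
    refine mulVecLin_surjective_of_card_lt ?_ fun k =>
      cokerAnnihilator_le_toBlock _ _ hzero (hN k)
    have ha := card_filter_le_add_card_filter_lt a t
    have hb := card_filter_le_add_card_filter_lt b t
    rw [Fintype.card_subtype, Fintype.card_subtype]
    omega
  rw [← card_filter_subtype (fun j => t < b j) (fun j => p (b j)),
    ← card_filter_subtype (fun i => t < a i) (fun i => p (a i))]
  exact card_filter_le_of_mulVecLin_surjective (fun j i => hΦ j.1 i.1) hblock p

lemma card_filter_le_le_card_filter_le_add_two (hcard : Fintype.card κ = Fintype.card ι + 2)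
    (hΦ : ∀ j i, IsWeightedHomogeneous (fun _ : Fin 3 => (1 : ℤ)) (Φ j i) (a i - b j))
    (hN : ∀ k, X k ^ N ∈ cokerAnnihilator Φ) (t : ℤ) :
    #{i | a i ≤ t} ≤ #{j | b j ≤ t} + 2 := by
  by_contra! ht
  have h := card_filter_lt_and_le_of_card_filter_le_lt hcard hΦ hN (t := t) (by omega)
    fun _ => True
  have ha := card_filter_le_add_card_filter_lt a t
  have hb := card_filter_le_add_card_filter_lt b t
  simp only [and_true] at h
  omega

lemma card_filter_le_lt_of_le (hcard : Fintype.card κ = Fintype.card ι + 2)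
    (hΦ : ∀ j i, IsWeightedHomogeneous (fun _ : Fin 3 => (1 : ℤ)) (Φ j i) (a i - b j))
    (hN : ∀ k, X k ^ N ∈ cokerAnnihilator Φ) {t t' : ℤ} (htt' : t ≤ t')
    (ht : #{j | b j ≤ t} < #{i | a i ≤ t}) : #{j | b j ≤ t'} < #{i | a i ≤ t'} := by
  have h := card_filter_lt_and_le_of_card_filter_le_lt hcard hΦ hN ht (· ≤ t')
  rw [← card_filter_le_add_card_filter_lt_and_le a htt',
    ← card_filter_le_add_card_filter_lt_and_le b htt']
  omega

end DegreeCondition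

/-! ### Sums of ramps -/

section Ramp

open Finset

/-- The piecewise linear function of `u` with slope `-1` on `u ≤ s` and on `r ≤ u` and value `0`
in between, for `s ≤ r`. The first difference of the Hilbert function is a difference of sums of
its values. -/
def ramp (s r u : ℤ) : ℤ := max (s - u) 0 - max (u - r) 0

lemma ramp_eq_sub (s r u : ℤ) :
    ramp s r u = r - u - (max (r - u) 0 - max (s - u) 0) := by
  unfold ramp
  omega

lemma ramp_eq_sub_ramp_swap (s r u : ℤ) : ramp s r u = s + r - 2 * u - ramp r s u := by
  unfold ramp
  omega

variable {ι κ : Type*} [Fintype ι] [Fintype κ] {a : κ → ℤ} {b : ι → ℤ}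

lemma sum_max_sub_sub_max_sub (a : κ → ℤ) {s r : ℤ} (hsr : s ≤ r) :
    ∑ i, (max (r - a i) 0 - max (s - a i) 0) = ∑ t ∈ Ico s r, (#{i | a i ≤ t} : ℤ) := by
  simp only [card_filter, Nat.cast_sum]
  rw [sum_comm]
  refine sum_congr rfl fun i _ => ?_
  have hIco : {t ∈ Ico s r | a i ≤ t} = Ico (max s (a i)) r := by
    ext t
    simp only [mem_filter, mem_Ico, max_le_iff]
    tauto
  simp only [Nat.cast_ite, Nat.cast_one, Nat.cast_zero, sum_boole, hIco, Int.card_Ico]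
  omega

lemma sum_max_sub_eq_sum_card_filter_le {m s : ℤ} (hms : m ≤ s) (hm : ∀ i, m ≤ a i) :
    ∑ i, max (s - a i) 0 = ∑ t ∈ Ico m s, (#{i | a i ≤ t} : ℤ) := by
  rw [← sum_max_sub_sub_max_sub a hms]
  exact sum_congr rfl fun i _ => by have := hm i; omega

lemma sum_max_sub_le_sum_max_sub {s : ℤ} (h : ∀ t < s, #{i | a i ≤ t} ≤ #{j | b j ≤ t}) :
    ∑ i, max (s - a i) 0 ≤ ∑ j, max (s - b j) 0 := by
  obtain ⟨m, hm⟩ := (insert s (univ.image a ∪ univ.image b)).bddBelow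
  have hms : m ≤ s := hm (by simp)
  rw [sum_max_sub_eq_sum_card_filter_le hms fun i => hm (by simp),
    sum_max_sub_eq_sum_card_filter_le hms fun j => hm (by simp)]
  exact sum_le_sum fun t ht => Nat.cast_le.2 (h t (mem_Ico.1 ht).2)

lemma sum_max_sub_le_sum_max_sub' {r : ℤ} (h : ∀ t, r ≤ t → #{j | t < b j} ≤ #{i | t < a i}) :
    ∑ j, max (b j - r) 0 ≤ ∑ i, max (a i - r) 0 := by
  simpa only [neg_sub_neg] using
    sum_max_sub_le_sum_max_sub (a := fun j => -b j) (b := fun i => -a i) (s := -r) fun t ht => by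
      simpa only [neg_le, Int.sub_one_lt_iff] using h (-t - 1) (by omega)

lemma sum_ramp_le_sum_ramp {s r : ℤ} (hsr : s ≤ r)
    (hcard : Fintype.card κ = Fintype.card ι + 2) (hsum : ∑ i, a i = ∑ j, b j + (s + r))
    (h₂ : ∀ t, #{i | a i ≤ t} ≤ #{j | b j ≤ t} + 2)
    (hmono : ∀ t t', t ≤ t' → #{j | b j ≤ t} < #{i | a i ≤ t} → #{j | b j ≤ t'} < #{i | a i ≤ t'}) :
    ∑ i, ramp s r (a i) ≤ ∑ j, ramp s r (b j) := by
  by_cases hlow : ∀ t < s, #{i | a i ≤ t} ≤ #{j | b j ≤ t}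
  · have hupper (t : ℤ) : #{j | t < b j} ≤ #{i | t < a i} := by
      have := h₂ t
      have := card_filter_le_add_card_filter_lt a t
      have := card_filter_le_add_card_filter_lt b t
      omega
    simp only [ramp, sum_sub_distrib]
    exact sub_le_sub (sum_max_sub_le_sum_max_sub hlow)
      (sum_max_sub_le_sum_max_sub' fun t _ => hupper t)
  · push Not at hlow
    obtain ⟨t₀, ht₀s, ht₀⟩ := hlow
    have hgap : ∑ t ∈ Ico s r, ((#{j | b j ≤ t} : ℤ) + 1) ≤ ∑ t ∈ Ico s r, (#{i | a i ≤ t} : ℤ) :=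
      sum_le_sum fun t ht => by
        have := hmono t₀ t (ht₀s.le.trans (mem_Ico.1 ht).1) ht₀
        omega
    rw [sum_add_distrib, ← sum_max_sub_sub_max_sub a hsr, ← sum_max_sub_sub_max_sub b hsr] at hgap
    simp only [ramp_eq_sub s r]
    simp only [sum_sub_distrib, sum_const, card_univ, nsmul_eq_mul, hcard, Int.card_Ico, mul_one]
      at hgap ⊢
    push_cast [Int.toNat_sub_of_le hsr] at hgap ⊢
    linarith

end Ramp

/-! ### The Hilbert function -/

section HilbertFunction

variable {K : Type*} [Field K] {n : ℕ} {a : Fin (n + 2) → ℤ} {b : Fin n → ℤ}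
  {Φ : Matrix (Fin n) (Fin (n + 2)) (MvPolynomial (Fin 3) K)}

lemma finrank_Md_sub (hΦ : ∀ j i, homog (Φ j i) (a i - b j)) (hfin : FiniteColength n a b Φ)
    {s r : ℤ} (hsr : s + r = ∑ i, a i - ∑ j, b j) :
    (Module.finrank K (Md n a b Φ (s - 1)) : ℤ) - Module.finrank K (Md n a b Φ (s - 1 - 1)) =
      ∑ j, ramp s r (b j) - ∑ i, ramp s r (a i) := by
  have hramp (u : ℤ) : ramp s r u =
      max (s - 1 + 1 - u) 0 - max (s - 1 + 1 - (s + r - u)) 0 := by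
    unfold ramp
    omega
  rw [finrank_Md hΦ hfin hsr, finrank_Md hΦ hfin hsr]
  simp only [hramp, Finset.sum_sub_distrib, ← finrank_degPiece_sub (K := K)]
  ring

lemma sum_ramp_le_sum_ramp_of_finiteColength (hΦ : ∀ j i, homog (Φ j i) (a i - b j))
    (hfin : FiniteColength n a b Φ) {s r : ℤ} (hsr : s + r = ∑ i, a i - ∑ j, b j) (hle : s ≤ r) :
    ∑ i, ramp s r (a i) ≤ ∑ j, ramp s r (b j) := by
  obtain ⟨N, hN⟩ := exists_X_pow_mem_cokerAnnihilator hfin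
  have hcard : Fintype.card (Fin (n + 2)) = Fintype.card (Fin n) + 2 := by simp
  exact sum_ramp_le_sum_ramp hle hcard (by omega)
    (card_filter_le_le_card_filter_le_add_two hcard hΦ hN)
    fun _ _ => card_filter_le_lt_of_le hcard hΦ hN

lemma finrank_Md_sub_one_le (hΦ : ∀ j i, homog (Φ j i) (a i - b j))
    (hfin : FiniteColength n a b Φ) {d : ℤ} (hd : 2 * (d + 1) ≤ ∑ i, a i - ∑ j, b j) :
    Module.finrank K (Md n a b Φ (d - 1)) ≤ Module.finrank K (Md n a b Φ d) := by
  have hsr : d + 1 + (∑ i, a i - ∑ j, b j - (d + 1)) = ∑ i, a i - ∑ j, b j := by ring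
  have hdiff := finrank_Md_sub hΦ hfin hsr
  have hramp := sum_ramp_le_sum_ramp_of_finiteColength hΦ hfin hsr (by omega)
  rw [add_sub_cancel_right] at hdiff
  omega

lemma finrank_Md_le_sub_one (hΦ : ∀ j i, homog (Φ j i) (a i - b j))
    (hfin : FiniteColength n a b Φ) {d : ℤ} (hd : ∑ i, a i - ∑ j, b j ≤ 2 * (d + 1)) :
    Module.finrank K (Md n a b Φ d) ≤ Module.finrank K (Md n a b Φ (d - 1)) := by
  have hsr : d + 1 + (∑ i, a i - ∑ j, b j - (d + 1)) = ∑ i, a i - ∑ j, b j := by ring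
  have hdiff := finrank_Md_sub hΦ hfin hsr
  have hramp := sum_ramp_le_sum_ramp_of_finiteColength hΦ hfin ((add_comm _ _).trans hsr)
    (by omega)
  simp only [ramp_eq_sub_ramp_swap (d + 1), Finset.sum_sub_distrib, Finset.sum_const,
    Finset.card_univ, Fintype.card_fin, ← Finset.mul_sum, nsmul_eq_mul] at hdiff
  rw [add_sub_cancel_right] at hdiff
  push_cast at hdiff
  linarith

theorem statement6_general (n : ℕ) (a : Fin (n + 2) → ℤ) (b : Fin n → ℤ)
    (Φ : Matrix (Fin n) (Fin (n + 2)) (MvPolynomial (Fin 3) K))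
    (hΦ : ∀ j i, homog (Φ j i) (a i - b j)) (hfin : FiniteColength n a b Φ) :
    (∀ d : ℤ, d ≤ (∑ i, a i - ∑ j, b j) / 2 - 1 →
      Module.finrank K (Md n a b Φ (d - 1)) ≤ Module.finrank K (Md n a b Φ d)) ∧
    (∀ d : ℤ, (∑ i, a i - ∑ j, b j) / 2 - 1 ≤ d →
      Module.finrank K (Md n a b Φ (d + 1)) ≤ Module.finrank K (Md n a b Φ d)) := by
  refine ⟨fun d hd => finrank_Md_sub_one_le hΦ hfin (by omega), fun d hd => ?_⟩
  have h := finrank_Md_le_sub_one hΦ hfin (d := d + 1) (by omega)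
  rwa [add_sub_cancel_right] at h

end HilbertFunction

/-- The Hilbert function of `M = coker φ` is unimodal: there is an integer `p`
such that `dim M_{d-1} ≤ dim M_d` for all `d ≤ p` and `dim M_d ≥ dim M_{d+1}` for all
`d ≥ p`. -/
theorem statement6 {K : Type*} [Field K] [IsAlgClosed K] [CharZero K]
    (n : ℕ) (a : Fin (n + 2) → ℤ) (b : Fin n → ℤ)
    (Φ : Matrix (Fin n) (Fin (n + 2)) (MvPolynomial (Fin 3) K))
    (hΦ : ∀ j i, homog (Φ j i) (a i - b j))
    (hfin : FiniteColength n a b Φ) :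
    ∃ p : ℤ,
      (∀ d : ℤ, d ≤ p →
        Module.finrank K (Md n a b Φ (d - 1)) ≤ Module.finrank K (Md n a b Φ d)) ∧
      (∀ d : ℤ, p ≤ d →
        Module.finrank K (Md n a b Φ (d + 1)) ≤ Module.finrank K (Md n a b Φ d)) := by
  exact ⟨_, statement6_general n a b Φ hΦ hfin⟩
end

section
/- For a general linear form L ∈ R_1 there exists an integer r such that the multiplication map ×L : M_{d−1} → M_d is injective for all d < r and surjective for all d ≥ r. -/
open MvPolynomial

/-!
Dividing out `L` restricts the presentation of `M` to a line, where `×L : M_{d-1} → M_d` is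
surjective as soon as the restricted cokernel vanishes in degree `d`, and injective as soon as every
syzygy of degree `d` of the restricted matrix lifts to a syzygy of `Φ`.

On a line the restricted matrix has a free kernel of rank two, say with generators in degrees
`p ≤ r + 1`. By convexity of the Hilbert function of the kernel, the restricted cokernel vanishes
from degree `r` on, which gives surjectivity for `d ≥ r`. In degrees `d < r` the syzygies
are multiples of the generator of degree `p`, so it is enough to lift this one.

That is done on the generic line `z = α x + β y`, with `α` and `β` indeterminates. The derivation
`D = ∂/∂α - X ∂/∂β` kills the restrictions of forms in `x, y, z`, so it maps a primitive syzygy `t`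
of minimal degree `p` to a syzygy of degree `p + 1`, which is a multiple `D t = l t` with `l` of
degree at most one. Comparing extreme coefficients forces `l = 0`. In characteristic zero the kernel
of `D` consists precisely of the restrictions of ternary forms, hence `t` lifts. Finally, all
conditions used on the generic line persist on a general line.
-/

namespace WeakLefschetz

open Filter

section IntegerSequences

variable {h : ℤ → ℤ}

lemma zero_le_slope (hconv : Monotone fun d => h (d + 1) - h d) (hbot : ∀ᶠ d in atBot, h d = 0)
    (d : ℤ) : 0 ≤ h (d + 1) - h d := by
  obtain ⟨m, hm⟩ := eventually_atBot.1 hbot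
  have hle : h (min d (m - 1) + 1) - h (min d (m - 1)) ≤ h (d + 1) - h d :=
    hconv (min_le_left d (m - 1))
  rwa [hm _ (by omega), hm _ (by omega), sub_zero] at hle

lemma zero_le_of_convex (hconv : Monotone fun d => h (d + 1) - h d)
    (hbot : ∀ᶠ d in atBot, h d = 0) (d : ℤ) : 0 ≤ h d := by
  obtain ⟨m, hm⟩ := eventually_atBot.1 hbot
  have hmono : Monotone h :=
    monotone_int_of_le_succ fun e => sub_nonneg.1 (zero_le_slope hconv hbot e)
  exact (hm _ (min_le_right d m)).ge.trans (hmono (min_le_left d m))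

lemma one_le_slope_of_ne_zero (hconv : Monotone fun d => h (d + 1) - h d)
    (hbot : ∀ᶠ d in atBot, h d = 0) {d : ℤ} (hd : h (d + 1) ≠ 0) : 1 ≤ h (d + 1) - h d := by
  by_contra! hslope
  obtain ⟨m, hm⟩ := eventually_atBot.1 hbot
  have hconst : ∀ e ≤ d + 1, h e = h (d + 1) := fun e he => by
    induction e, he using Int.leInductionDown with
    | base => rfl
    | pred e he ih =>
      have hle : h (e - 1 + 1) - h (e - 1) ≤ h (d + 1) - h d := hconv (by omega : e - 1 ≤ d)
      have hge := zero_le_slope hconv hbot (e - 1)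
      rw [sub_add_cancel] at hle hge
      omega
  exact hd ((hconst _ (min_le_left _ m)).symm.trans (hm _ (min_le_right _ _)))

lemma exists_eq_max_of_slope_le_one (hconv : Monotone fun d => h (d + 1) - h d)
    (hbot : ∀ᶠ d in atBot, h d = 0) {r : ℤ} (hr : ∀ d < r, h (d + 1) - h d ≤ 1) :
    ∃ p, ∀ d ≤ r, h d = max 0 (d - p + 1) := by
  have hnonneg := zero_le_of_convex hconv hbot
  refine ⟨r + 1 - h r, fun d hd => ?_⟩
  induction d, hd using Int.leInductionDown with
  | base => have := hnonneg r; omega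
  | pred d hd ih =>
    have hle := hr (d - 1) (by omega)
    have hge := zero_le_slope hconv hbot (d - 1)
    have hone := one_le_slope_of_ne_zero hconv hbot (d := d - 1)
    have hnn := hnonneg (d - 1)
    rw [sub_add_cancel] at hle hge hone
    by_cases hzero : h d = 0
    · omega
    · have := hone hzero
      omega

theorem exists_slope_eq_two_and_eq_max (hconv : Monotone fun d => h (d + 1) - h d)
    (hbot : ∀ᶠ d in atBot, h d = 0) (htop : ∀ᶠ d in atTop, h (d + 1) - h d = 2) :
    ∃ r p, (∀ d ≥ r, h (d + 1) - h d = 2) ∧ ∀ d ≤ r, h d = max 0 (d - p + 1) := by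
  obtain ⟨m, hm⟩ := eventually_atBot.1 hbot
  obtain ⟨t, ht⟩ := eventually_atTop.1 htop
  have hle_two (d : ℤ) : h (d + 1) - h d ≤ 2 :=
    (hconv (le_max_left d t)).trans (ht _ (le_max_right d t)).le
  obtain ⟨r, hr, hmin⟩ := Int.exists_least_of_bdd (P := fun d => h (d + 1) - h d = 2)
    ⟨m, fun d hd => by
      by_contra! hlt
      rw [hm d hlt.le, hm (d + 1) (by omega)] at hd
      omega⟩ ⟨t, ht t le_rfl⟩
  obtain ⟨p, hp⟩ := exists_eq_max_of_slope_le_one hconv hbot (r := r) fun d hd =>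
    Int.lt_add_one_iff.1 ((hle_two d).lt_of_ne fun heq => (hmin d heq).not_gt hd)
  exact ⟨r, p, fun d hd => (hle_two d).antisymm (hr.ge.trans (hconv hd)), hp⟩

end IntegerSequences

section BoundedDegree

open scoped Polynomial

variable (R : Type*) [CommRing R] {ι κ : Type*}

/-- The polynomials of degree at most the integer `e`; only zero when `e < 0`. -/
noncomputable def degLE (e : ℤ) : Submodule R R[X] :=
  Polynomial.degreeLT R (e + 1).toNat

/-- The degree-`d` piece of `⊕ i, R[X, Z](-a i)`, dehomogenized by `Z = 1`. -/
noncomputable def freeLE (a : ι → ℤ) (d : ℤ) : Submodule R (ι → R[X]) :=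
  Submodule.pi Set.univ fun i => degLE R (d - a i)

variable {R} {a : ι → ℤ} {b : κ → ℤ} {d e e' : ℤ} {f g : R[X]} {s : ι → R[X]}

lemma mem_degLE : f ∈ degLE R e ↔ ∀ k : ℕ, e < k → f.coeff k = 0 := by
  rw [degLE, Polynomial.mem_degreeLT, Polynomial.degree_lt_iff_coeff_zero]
  exact forall_congr' fun k => ⟨fun hk hek => hk (by omega), fun hk hek => hk (by omega)⟩

lemma mem_degLE_iff_natDegree_le (he : 0 ≤ e) : f ∈ degLE R e ↔ (f.natDegree : ℤ) ≤ e := by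
  rw [mem_degLE, ← Int.toNat_of_nonneg he, Nat.cast_le, Polynomial.natDegree_le_iff_coeff_eq_zero]
  simp only [Nat.cast_lt]

lemma degLE_mono (h : e ≤ e') : degLE R e ≤ degLE R e' :=
  Polynomial.degreeLT_mono (by omega)

lemma degLE_of_neg (he : e < 0) : degLE R e = ⊥ := by
  refine (Submodule.eq_bot_iff _).2 fun f hf => Polynomial.ext fun k => ?_
  exact (mem_degLE.1 hf k (by omega)).trans (Polynomial.coeff_zero k).symm

lemma X_mul_mem_degLE : Polynomial.X * f ∈ degLE R (e + 1) ↔ f ∈ degLE R e := by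
  simp only [mem_degLE]
  refine ⟨fun h k hk => ?_, fun h k hk => ?_⟩
  · simpa only [Polynomial.coeff_X_mul] using h (k + 1) (by push_cast; omega)
  · cases k with
    | zero => exact Polynomial.coeff_X_mul_zero f
    | succ k => exact (Polynomial.coeff_X_mul f k).trans (h k (by push_cast at hk; omega))

lemma mul_mem_degLE (hf : f ∈ degLE R e) (hg : g ∈ degLE R e') : f * g ∈ degLE R (e + e') := by
  rw [mem_degLE] at hf hg ⊢
  intro k hk
  rw [Polynomial.coeff_mul]
  refine Finset.sum_eq_zero fun ⟨i, j⟩ hij => ?_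
  rw [Finset.HasAntidiagonal.mem_antidiagonal] at hij
  by_cases hi : e < i
  · rw [hf i hi, zero_mul]
  · rw [hg j (by omega), mul_zero]

lemma X_pow_mem_degLE {k : ℕ} (h : (k : ℤ) ≤ e) : (Polynomial.X ^ k : R[X]) ∈ degLE R e :=
  mem_degLE.2 fun j hj => by rw [Polynomial.coeff_X_pow, if_neg (by omega)]

lemma C_mem_degLE (he : 0 ≤ e) (c : R) : Polynomial.C c ∈ degLE R e :=
  mem_degLE.2 fun j hj => Polynomial.coeff_C_of_ne_zero (by omega)

lemma map_mem_degLE_iff {S : Type*} [CommRing S] {φ : R →+* S} (hφ : Function.Injective φ) :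
    f.map φ ∈ degLE S e ↔ f ∈ degLE R e := by
  simp only [mem_degLE, Polynomial.coeff_map, map_eq_zero_iff φ hφ]

lemma map_mem_degLE {S : Type*} [CommRing S] (φ : R →+* S) (hf : f ∈ degLE R e) :
    f.map φ ∈ degLE S e :=
  mem_degLE.2 fun k hk => by rw [Polynomial.coeff_map, mem_degLE.1 hf k hk, map_zero]

lemma mem_degLE_of_mul_mem [IsDomain R] (hg : g ≠ 0) (h : g * f ∈ degLE R e) : f ∈ degLE R e := by
  rcases eq_or_ne f 0 with rfl | hf
  · exact zero_mem _
  have he : 0 ≤ e := by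
    by_contra! he
    rw [degLE_of_neg he, Submodule.mem_bot] at h
    exact mul_ne_zero hg hf h
  rw [mem_degLE_iff_natDegree_le he] at h ⊢
  rw [Polynomial.natDegree_mul hg hf] at h
  omega

lemma mem_freeLE : s ∈ freeLE R a d ↔ ∀ i, s i ∈ degLE R (d - a i) := by
  simp only [freeLE, Submodule.mem_pi, Set.mem_univ, true_imp_iff]

lemma freeLE_mono {d' : ℤ} (h : d ≤ d') : freeLE R a d ≤ freeLE R a d' := fun _ hs =>
  mem_freeLE.2 fun i => degLE_mono (by omega) (mem_freeLE.1 hs i)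

lemma freeLE_eq_bot (h : ∀ i, d < a i) : freeLE R a d = ⊥ := by
  refine (Submodule.eq_bot_iff _).2 fun s hs => funext fun i => ?_
  have hi := mem_freeLE.1 hs i
  rwa [degLE_of_neg (by linarith [h i]), Submodule.mem_bot] at hi

lemma X_smul_mem_freeLE : (Polynomial.X : R[X]) • s ∈ freeLE R a (d + 1) ↔ s ∈ freeLE R a d := by
  simp only [mem_freeLE, Pi.smul_apply, smul_eq_mul, add_sub_right_comm d 1, X_mul_mem_degLE]

lemma smul_mem_freeLE (hg : g ∈ degLE R e) (hs : s ∈ freeLE R a d) :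
    g • s ∈ freeLE R a (e + d) :=
  mem_freeLE.2 fun i => add_sub_assoc e d (a i) ▸ mul_mem_degLE hg (mem_freeLE.1 hs i)

lemma map_comp_mem_freeLE {S : Type*} [CommRing S] (φ : R →+* S) (hs : s ∈ freeLE R a d) :
    (fun i => (s i).map φ) ∈ freeLE S a d :=
  mem_freeLE.2 fun i => map_mem_degLE φ (mem_freeLE.1 hs i)

lemma mem_degLE_of_smul_mem_freeLE [IsDomain R] {p : ℤ} (hs : s ∉ freeLE R a (p - 1))
    (h : g • s ∈ freeLE R a d) : g ∈ degLE R (d - p) := by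
  simp only [mem_freeLE, mem_degLE, not_forall] at hs
  obtain ⟨i, k, hk, hsik⟩ := hs
  rcases eq_or_ne g 0 with rfl | hg
  · exact zero_mem _
  have hsi : s i ≠ 0 := fun h0 => hsik (by rw [h0, Polynomial.coeff_zero])
  have hki : k ≤ (s i).natDegree := Polynomial.le_natDegree_of_ne_zero hsik
  have hgs : g * s i ∈ degLE R (d - a i) := mem_freeLE.1 h i
  have hdeg : ((g * s i).natDegree : ℤ) ≤ d - a i := by
    by_contra! hlt
    exact mul_ne_zero hg hsi (Polynomial.leadingCoeff_eq_zero.1 (mem_degLE.1 hgs _ hlt))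
  rw [Polynomial.natDegree_mul hg hsi] at hdeg
  rw [mem_degLE_iff_natDegree_le (by omega)]
  omega

lemma single_X_pow_mem_freeLE [DecidableEq κ] {j : κ} {l : ℕ} (hl : (l : ℤ) ≤ d - b j) :
    Pi.single j (Polynomial.X ^ l) ∈ freeLE R b d := by
  refine mem_freeLE.2 fun i => ?_
  obtain rfl | hij := eq_or_ne i j
  · rw [Pi.single_eq_same]
    exact X_pow_mem_degLE hl
  · rw [Pi.single_eq_of_ne hij]
    exact zero_mem _

lemma freeLE_le_of_single_X_pow_mem [Finite κ] [DecidableEq κ] {S : Submodule R (κ → R[X])}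
    (hS : ∀ (j : κ) (l : ℕ), (l : ℤ) ≤ d - b j → Pi.single j (Polynomial.X ^ l) ∈ S) :
    freeLE R b d ≤ S := by
  cases nonempty_fintype κ
  intro s hs
  rw [← Finset.univ_sum_single s]
  refine sum_mem fun j _ => ?_
  rw [(s j).as_sum_support_C_mul_X_pow, ← LinearMap.single_apply R, map_sum]
  refine sum_mem fun l hl => ?_
  have hlj : (l : ℤ) ≤ d - b j := by
    by_contra! hlt
    exact Polynomial.mem_support_iff.1 hl (mem_degLE.1 (mem_freeLE.1 hs j) l hlt)
  rw [← Polynomial.smul_eq_C_mul, map_smul]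
  exact S.smul_mem _ (hS j l hlj)

end BoundedDegree

section Dimension

open scoped Polynomial

variable (k : Type*) [Field k] {ι : Type*}

instance finiteDimensional_degLE (e : ℤ) : FiniteDimensional k (degLE k e) :=
  (Polynomial.degreeLTEquiv k _).symm.finiteDimensional

lemma finrank_degLE (e : ℤ) : Module.finrank k (degLE k e) = (e + 1).toNat := by
  rw [degLE, (Polynomial.degreeLTEquiv k _).finrank_eq, Module.finrank_fin_fun]

/-- A product of submodules, viewed inside the product module, is the product of the modules. -/
noncomputable def submodulePiEquiv {R : Type*} [Semiring R] {M : ι → Type*}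
    [∀ i, AddCommMonoid (M i)] [∀ i, Module R (M i)] (p : ∀ i, Submodule R (M i)) :
    Submodule.pi Set.univ p ≃ₗ[R] ∀ i, p i where
  toFun s i := ⟨s.1 i, s.2 i trivial⟩
  invFun s := ⟨fun i => s i, fun i _ => (s i).2⟩
  map_add' _ _ := rfl
  map_smul' _ _ := rfl

variable (a : ι → ℤ) (d : ℤ)

instance finiteDimensional_freeLE [Finite ι] : FiniteDimensional k (freeLE k a d) :=
  (submodulePiEquiv _).symm.finiteDimensional

lemma finrank_freeLE [Fintype ι] : Module.finrank k (freeLE k a d) = ∑ i, (d - a i + 1).toNat := by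
  rw [freeLE, (submodulePiEquiv _).finrank_eq, Module.finrank_pi_fintype]
  simp only [finrank_degLE]

end Dimension

section Syzygies

open scoped Polynomial Pointwise

variable {R : Type*} [CommRing R] {ι κ : Type*} [Fintype ι]

/-- The `R`-linear map `(ι → R[X]) → (κ → R[X])` given by a matrix of polynomials. -/
noncomputable def matMap (Ψ : Matrix κ ι R[X]) : (ι → R[X]) →ₗ[R] (κ → R[X]) :=
  Ψ.mulVecLin.restrictScalars R

/-- The degree-`d` piece of the kernel of a matrix of dehomogenized forms, whose columns have
degrees `a`. -/
noncomputable def syzLE (a : ι → ℤ) (Ψ : Matrix κ ι R[X]) (d : ℤ) : Submodule R (ι → R[X]) :=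
  freeLE R a d ⊓ LinearMap.ker (matMap Ψ)

/-- The degree-`d` piece of the cokernel of a matrix of dehomogenized forms is zero. -/
def CokerVanishes (a : ι → ℤ) (b : κ → ℤ) (Ψ : Matrix κ ι R[X]) (d : ℤ) : Prop :=
  freeLE R b d ≤ (freeLE R a d).map (matMap Ψ)

variable {a : ι → ℤ} {b : κ → ℤ} {Ψ : Matrix κ ι R[X]} {d e p : ℤ} {g : R[X]} {s : ι → R[X]}

lemma matMap_apply (Ψ : Matrix κ ι R[X]) (s : ι → R[X]) : matMap Ψ s = Ψ.mulVec s := rfl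

lemma matMap_smul (Ψ : Matrix κ ι R[X]) (g : R[X]) (s : ι → R[X]) :
    matMap Ψ (g • s) = g • matMap Ψ s :=
  Ψ.mulVecLin.map_smul g s

lemma matMap_mem_freeLE (hΨ : ∀ j i, Ψ j i ∈ degLE R (a i - b j)) (hs : s ∈ freeLE R a d) :
    matMap Ψ s ∈ freeLE R b d := by
  refine mem_freeLE.2 fun j => sum_mem fun i _ => ?_
  have h := mul_mem_degLE (hΨ j i) (mem_freeLE.1 hs i)
  rwa [add_comm, sub_add_sub_cancel] at h

lemma mem_syzLE : s ∈ syzLE a Ψ d ↔ s ∈ freeLE R a d ∧ matMap Ψ s = 0 := by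
  rw [syzLE, Submodule.mem_inf, LinearMap.mem_ker]

lemma syzLE_mono {d' : ℤ} (h : d ≤ d') : syzLE a Ψ d ≤ syzLE a Ψ d' :=
  inf_le_inf_right _ (freeLE_mono h)

lemma smul_mem_syzLE (hg : g ∈ degLE R e) (hs : s ∈ syzLE a Ψ d) : g • s ∈ syzLE a Ψ (e + d) := by
  obtain ⟨hsa, hs0⟩ := mem_syzLE.1 hs
  exact mem_syzLE.2 ⟨smul_mem_freeLE hg hsa, by rw [matMap_smul, hs0, smul_zero]⟩

lemma X_smul_mem_syzLE [IsDomain R] :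
    (Polynomial.X : R[X]) • s ∈ syzLE a Ψ (d + 1) ↔ s ∈ syzLE a Ψ d := by
  rw [mem_syzLE, mem_syzLE, X_smul_mem_freeLE, matMap_smul, smul_eq_zero_iff_right
    Polynomial.X_ne_zero]

lemma syzLE_sup_X_smul_le [IsDomain R] (a : ι → ℤ) (Ψ : Matrix κ ι R[X]) (d : ℤ) :
    syzLE a Ψ d ⊔ (Polynomial.X : R[X]) • syzLE a Ψ d ≤ syzLE a Ψ (d + 1) := by
  refine sup_le (syzLE_mono (by omega)) fun s hs => ?_
  obtain ⟨t, ht, rfl⟩ := (Submodule.mem_smul_pointwise_iff_exists _ _ _).1 hs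
  exact X_smul_mem_syzLE.2 ht

lemma syzLE_inf_X_smul [IsDomain R] (a : ι → ℤ) (Ψ : Matrix κ ι R[X]) (d : ℤ) :
    syzLE a Ψ (d + 1) ⊓ (Polynomial.X : R[X]) • syzLE a Ψ (d + 1) =
      (Polynomial.X : R[X]) • syzLE a Ψ d := by
  ext s
  simp only [Submodule.mem_inf, Submodule.mem_smul_pointwise_iff_exists]
  constructor
  · rintro ⟨hs, t, -, rfl⟩
    exact ⟨t, X_smul_mem_syzLE.1 hs, rfl⟩
  · rintro ⟨t, ht, rfl⟩
    exact ⟨X_smul_mem_syzLE.2 ht, t, syzLE_mono (by omega) ht, rfl⟩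

lemma matMap_map {S : Type*} [CommRing S] (φ : R →+* S) (Ψ : Matrix κ ι R[X]) (s : ι → R[X]) :
    matMap (Ψ.map (Polynomial.map φ)) (fun i => (s i).map φ) =
      fun j => (matMap Ψ s j).map φ :=
  funext fun j => ((Polynomial.mapRingHom φ).map_mulVec Ψ s j).symm

lemma map_comp_mem_syzLE_iff {S : Type*} [CommRing S] {φ : R →+* S} (hφ : Function.Injective φ) :
    (fun i => (s i).map φ) ∈ syzLE a (Ψ.map (Polynomial.map φ)) d ↔ s ∈ syzLE a Ψ d := by
  simp only [mem_syzLE, mem_freeLE, map_mem_degLE_iff hφ, matMap_map, funext_iff, Pi.zero_apply,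
    Polynomial.map_eq_zero_iff hφ]

end Syzygies

section SyzygyDimension

open scoped Polynomial Pointwise

variable {k : Type*} [Field k] {ι κ : Type*} [Fintype ι] {a : ι → ℤ} {b : κ → ℤ}
  {Ψ : Matrix κ ι k[X]} {d p : ℤ} {s : ι → k[X]}

instance finiteDimensional_syzLE (a : ι → ℤ) (Ψ : Matrix κ ι k[X]) (d : ℤ) :
    FiniteDimensional k (syzLE a Ψ d) :=
  Submodule.finiteDimensional_of_le (inf_le_left : _ ≤ freeLE k a d)

/-- The Hilbert function of the kernel of a matrix of dehomogenized forms. It is integer-valued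
because its first and second differences are what matters. -/
noncomputable def syzDim (a : ι → ℤ) (Ψ : Matrix κ ι k[X]) (d : ℤ) : ℤ :=
  Module.finrank k (syzLE a Ψ d)

lemma syzDim_eq_zero_iff : syzDim a Ψ d = 0 ↔ syzLE a Ψ d = ⊥ := by
  rw [syzDim, Nat.cast_eq_zero, Submodule.finrank_eq_zero]

lemma syzDim_eq_of_cokerVanishes [Fintype κ] (hΨ : ∀ j i, Ψ j i ∈ degLE k (a i - b j))
    (h : CokerVanishes a b Ψ d) :
    syzDim a Ψ d = ∑ i, ((d - a i + 1).toNat : ℤ) - ∑ j, ((d - b j + 1).toNat : ℤ) := by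
  have himage : (freeLE k a d).map (matMap Ψ) = freeLE k b d :=
    (Submodule.map_le_iff_le_comap.2 fun _ hs =>
      Submodule.mem_comap.2 (matMap_mem_freeLE hΨ hs)).antisymm h
  have hker : Module.finrank k ((LinearMap.ker (matMap Ψ)).comap (freeLE k a d).subtype) =
      Module.finrank k (syzLE a Ψ d) := by
    rw [syzLE, ← Submodule.map_comap_subtype, Submodule.finrank_map_subtype_eq]
  have hrank := LinearMap.finrank_range_add_finrank_ker ((matMap Ψ).domRestrict (freeLE k a d))
  rw [LinearMap.range_domRestrict, LinearMap.ker_domRestrict, himage, hker, finrank_freeLE,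
    finrank_freeLE] at hrank
  rw [syzDim, eq_sub_iff_add_eq']
  exact_mod_cast hrank

lemma syzDim_eq_syzDim_of_cokerVanishes {k' : Type*} [Field k'] {Ψ' : Matrix κ ι k'[X]}
    [Finite κ] (hΨ : ∀ j i, Ψ j i ∈ degLE k (a i - b j))
    (hΨ' : ∀ j i, Ψ' j i ∈ degLE k' (a i - b j))
    (h : CokerVanishes a b Ψ d) (h' : CokerVanishes a b Ψ' d) :
    syzDim a Ψ d = syzDim a Ψ' d := by
  cases nonempty_fintype κ
  exact (syzDim_eq_of_cokerVanishes hΨ h).trans (syzDim_eq_of_cokerVanishes hΨ' h').symm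

lemma finrank_X_smul {σ : Type*} (S : Submodule k (σ → k[X])) :
    Module.finrank k ↥((Polynomial.X : k[X]) • S) = Module.finrank k S :=
  (Submodule.equivMapOfInjective (DistribSMul.toLinearMap k (σ → k[X]) (Polynomial.X : k[X]))
    (smul_right_injective _ Polynomial.X_ne_zero) S).finrank_eq.symm

lemma finrank_syzLE_sup_X_smul (a : ι → ℤ) (Ψ : Matrix κ ι k[X]) (d : ℤ) :
    (Module.finrank k ↥(syzLE a Ψ (d + 1) ⊔ (Polynomial.X : k[X]) • syzLE a Ψ (d + 1)) : ℤ) =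
      2 * syzDim a Ψ (d + 1) - syzDim a Ψ d := by
  have : FiniteDimensional k ↥((Polynomial.X : k[X]) • syzLE a Ψ (d + 1)) :=
    Submodule.finiteDimensional_of_le (le_sup_right.trans (syzLE_sup_X_smul_le a Ψ (d + 1)))
  have h := Submodule.finrank_sup_add_finrank_inf_eq (syzLE a Ψ (d + 1))
    ((Polynomial.X : k[X]) • syzLE a Ψ (d + 1))
  rw [syzLE_inf_X_smul, finrank_X_smul, finrank_X_smul] at h
  unfold syzDim
  omega

lemma monotone_syzDim_slope (a : ι → ℤ) (Ψ : Matrix κ ι k[X]) :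
    Monotone fun d => syzDim a Ψ (d + 1) - syzDim a Ψ d := by
  refine monotone_int_of_le_succ fun d => ?_
  have hle := Submodule.finrank_mono (syzLE_sup_X_smul_le a Ψ (d + 1))
  have hsup := finrank_syzLE_sup_X_smul a Ψ d
  unfold syzDim at hsup ⊢
  omega

lemma syzLE_sup_X_smul_eq
    (h : syzDim a Ψ (d + 1 + 1) - syzDim a Ψ (d + 1) = syzDim a Ψ (d + 1) - syzDim a Ψ d) :
    syzLE a Ψ (d + 1) ⊔ (Polynomial.X : k[X]) • syzLE a Ψ (d + 1) = syzLE a Ψ (d + 1 + 1) := by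
  refine Submodule.eq_of_le_of_finrank_eq (syzLE_sup_X_smul_le a Ψ (d + 1)) ?_
  have hsup := finrank_syzLE_sup_X_smul a Ψ d
  unfold syzDim at hsup h
  omega

/-- If `Ψ u = g` and `Ψ v = X g`, then `X u - v` is a syzygy, hence of the form `m + X m'` with
`m` and `m'` syzygies of degree `d + 1`; now `u - m'` has degree `d` and is mapped to `g`. -/
lemma CokerVanishes.of_succ
    (h : syzDim a Ψ (d + 1 + 1) - syzDim a Ψ (d + 1) = syzDim a Ψ (d + 1) - syzDim a Ψ d)
    (hcoker : CokerVanishes a b Ψ (d + 1)) : CokerVanishes a b Ψ d := by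
  intro g hg
  obtain ⟨u, hu, hug⟩ := hcoker (freeLE_mono (by omega) hg)
  obtain ⟨v, hv, hvg⟩ := hcoker (X_smul_mem_freeLE.2 hg)
  have hsyz : (Polynomial.X : k[X]) • u - v ∈ syzLE a Ψ (d + 1 + 1) := by
    refine mem_syzLE.2 ⟨sub_mem (X_smul_mem_freeLE.2 hu) (freeLE_mono (by omega) hv), ?_⟩
    rw [map_sub, matMap_smul, hug, hvg, sub_self]
  rw [← syzLE_sup_X_smul_eq h, Submodule.mem_sup] at hsyz
  obtain ⟨m, hm, _, hXm', hsum⟩ := hsyz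
  obtain ⟨m', hm', rfl⟩ := (Submodule.mem_smul_pointwise_iff_exists _ _ _).1 hXm'
  refine ⟨u - m', X_smul_mem_freeLE.1 ?_, ?_⟩
  · rw [smul_sub, sub_eq_iff_eq_add.1 hsum.symm, show m + Polynomial.X • m' + v -
      Polynomial.X • m' = m + v by abel]
    exact add_mem (mem_syzLE.1 hm).1 hv
  · rw [map_sub, (mem_syzLE.1 hm').2, sub_zero, hug]

lemma eventually_syzDim_eq_zero (a : ι → ℤ) (Ψ : Matrix κ ι k[X]) :
    ∀ᶠ d in atBot, syzDim a Ψ d = 0 := by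
  filter_upwards [eventually_all.2 fun i => eventually_lt_atBot (a i)] with d hd
  rw [syzDim_eq_zero_iff, syzLE, freeLE_eq_bot hd, bot_inf_eq]

lemma eventually_syzDim_slope_eq_two [Fintype κ] (hΨ : ∀ j i, Ψ j i ∈ degLE k (a i - b j))
    (hcard : Fintype.card ι = Fintype.card κ + 2)
    (hcoker : ∀ᶠ d in atTop, CokerVanishes a b Ψ d) :
    ∀ᶠ d in atTop, syzDim a Ψ (d + 1) - syzDim a Ψ d = 2 := by
  have hdim : ∀ᶠ d in atTop,
      syzDim a Ψ d = ∑ i, (d - a i + 1) - ∑ j, (d - b j + 1) := by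
    filter_upwards [hcoker, eventually_all.2 fun i => eventually_ge_atTop (a i),
      eventually_all.2 fun j => eventually_ge_atTop (b j)] with d hd ha hb
    have hnonneg {c : ℤ} (hc : c ≤ d) : ((d - c + 1).toNat : ℤ) = d - c + 1 := by omega
    simp only [syzDim_eq_of_cokerVanishes hΨ hd, hnonneg (ha _), hnonneg (hb _)]
  obtain ⟨D, hD⟩ := eventually_atTop.1 hdim
  refine eventually_atTop.2 ⟨D, fun d hd => ?_⟩
  rw [hD d hd, hD (d + 1) (by omega)]
  simp only [Finset.sum_add_distrib, Finset.sum_sub_distrib, Finset.sum_const, Finset.card_univ,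
    hcard, nsmul_eq_mul]
  push_cast
  ring

/-- The kernel is free of rank two, and `p` and `r + 1` are the degrees of its generators. -/
theorem exists_cokerVanishes_and_syzDim_eq_max [Fintype κ]
    (hΨ : ∀ j i, Ψ j i ∈ degLE k (a i - b j)) (hcard : Fintype.card ι = Fintype.card κ + 2)
    (hcoker : ∀ᶠ d in atTop, CokerVanishes a b Ψ d) :
    ∃ r p, (∀ d ≥ r, CokerVanishes a b Ψ d) ∧ ∀ d ≤ r, syzDim a Ψ d = max 0 (d - p + 1) := by
  obtain ⟨r, p, hslope, hdim⟩ := exists_slope_eq_two_and_eq_max (monotone_syzDim_slope a Ψ)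
    (eventually_syzDim_eq_zero a Ψ) (eventually_syzDim_slope_eq_two hΨ hcard hcoker)
  obtain ⟨D, hD⟩ := eventually_atTop.1 hcoker
  refine ⟨r, p, fun d hd => ?_, hdim⟩
  obtain hDd | hdD := le_total D d
  · exact hD d hDd
  induction d, hdD using Int.leInductionDown with
  | base => exact hD D le_rfl
  | pred d _ ih =>
    refine CokerVanishes.of_succ (d := d - 1) ?_ (by rw [sub_add_cancel]; exact ih (by omega))
    rw [hslope (d - 1) hd, hslope _ (by omega)]

lemma map_toSpanSingleton_degLE_le_syzLE (hs : s ∈ syzLE a Ψ p) (d : ℤ) :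
    (degLE k (d - p)).map ((LinearMap.toSpanSingleton k[X] (ι → k[X]) s).restrictScalars k) ≤
      syzLE a Ψ d := by
  rintro _ ⟨g, hg, rfl⟩
  exact sub_add_cancel d p ▸ smul_mem_syzLE hg hs

lemma finrank_map_toSpanSingleton_degLE {σ : Type*} {s : σ → k[X]} (hs0 : s ≠ 0) (d : ℤ) :
    Module.finrank k ((degLE k d).map
      ((LinearMap.toSpanSingleton k[X] (σ → k[X]) s).restrictScalars k)) = (d + 1).toNat := by
  rw [← (Submodule.equivMapOfInjective _ (smul_left_injective k[X] hs0) _).finrank_eq,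
    finrank_degLE]

lemma le_syzDim_of_mem_syzLE (hs0 : s ≠ 0) (hs : s ∈ syzLE a Ψ p) (d : ℤ) :
    d - p + 1 ≤ syzDim a Ψ d := by
  have h := Submodule.finrank_mono (map_toSpanSingleton_degLE_le_syzLE hs d)
  rw [finrank_map_toSpanSingleton_degLE hs0] at h
  unfold syzDim
  omega

lemma exists_eq_smul_of_mem_syzLE (hs0 : s ≠ 0) (hs : s ∈ syzLE a Ψ p)
    (h : syzDim a Ψ d = max 0 (d - p + 1)) {t : ι → k[X]} (ht : t ∈ syzLE a Ψ d) :
    ∃ g ∈ degLE k (d - p), t = g • s := by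
  have heq := Submodule.eq_of_le_of_finrank_eq (map_toSpanSingleton_degLE_le_syzLE hs d) (by
    rw [finrank_map_toSpanSingleton_degLE hs0]
    unfold syzDim at h
    omega)
  obtain ⟨g, hg, rfl⟩ := heq.ge ht
  exact ⟨g, hg, rfl⟩

end SyzygyDimension

section Homogeneous

variable {K : Type*} [Field K] {p f : MvPolynomial (Fin 3) K} {e : ℤ}

lemma homog_iff_degree : homog p e ↔ ∀ m, coeff m p ≠ 0 → (m.degree : ℤ) = e := by
  have hweight (m : Fin 3 →₀ ℕ) :
      Finsupp.weight (fun _ : Fin 3 => (1 : ℤ)) m = (m.degree : ℤ) := by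
    simp [Finsupp.weight_apply, Finsupp.degree_eq_sum, Finsupp.sum_fintype]
  simp only [homog, IsWeightedHomogeneous, hweight]

lemma homog_natCast_iff {N : ℕ} : homog p N ↔ p.IsHomogeneous N := by
  simp only [homog_iff_degree, IsHomogeneous, IsWeightedHomogeneous, Nat.cast_inj,
    Finsupp.degree_eq_weight_one, Pi.one_def]

lemma eq_zero_of_homog_of_neg (he : e < 0) (hp : homog p e) : p = 0 := by
  ext m
  by_contra hm
  have := homog_iff_degree.1 hp m hm
  omega

lemma homog_zero (e : ℤ) : homog (0 : MvPolynomial (Fin 3) K) e :=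
  isWeightedHomogeneous_zero K _ e

lemma homog_sum {ι : Type*} {s : Finset ι} {f : ι → MvPolynomial (Fin 3) K}
    (h : ∀ i ∈ s, homog (f i) e) : homog (∑ i ∈ s, f i) e :=
  sum_mem (S := weightedHomogeneousSubmodule K (fun _ : Fin 3 => (1 : ℤ)) e) h

lemma exists_homog_mul_eq_of_dvd {L : MvPolynomial (Fin 3) K} {l : ℤ} (hL : homog L l)
    (hf : homog f e) (hdvd : L ∣ f) : ∃ g, homog g (e - l) ∧ f = L * g := by
  obtain ⟨g, rfl⟩ := hdvd
  let grading := weightedHomogeneousSubmodule K (fun _ : Fin 3 => (1 : ℤ))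
  let _ : GradedAlgebra grading := weightedGradedAlgebra K _
  refine ⟨DirectSum.decompose grading g (e - l),
    SetLike.coe_mem (DirectSum.decompose grading g (e - l)), ?_⟩
  rw [← DirectSum.coe_decompose_mul_add_of_left_mem grading hL, add_sub_cancel]
  exact (DirectSum.decompose_of_mem_same grading hf).symm

lemma aeval_smul_of_isHomogeneous {σ R A : Type*} [CommRing R] [CommRing A] [Algebra R A]
    {p : MvPolynomial σ R} {N : ℕ} (hp : p.IsHomogeneous N) (t : A) (v : σ → A) :
    aeval (t • v) p = t ^ N * aeval v p := by
  rw [aeval_def, aeval_def, eval₂_eq, eval₂_eq, Finset.mul_sum]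
  refine Finset.sum_congr rfl fun m hm => ?_
  rw [hp.degree_eq_sum_deg_support hm, ← Finset.prod_pow_eq_pow_sum]
  simp only [Pi.smul_apply, smul_eq_mul, mul_pow, Finset.prod_mul_distrib]
  ring

end Homogeneous

section RestrictionToALine

open scoped Polynomial

variable {K : Type*} [Field K] {A B : Type*} [CommRing A] [Algebra K A] [CommRing B] [Algebra K B]
  {f : MvPolynomial (Fin 3) K} {e : ℤ}

/-- Restriction of ternary forms to the line `z = α x + β y`, dehomogenized by `y = 1`. The
coefficients `α` and `β` may live in any `K`-algebra, so that generic and special lines are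
treated together. -/
noncomputable def restrictLine (α β : A) : MvPolynomial (Fin 3) K →ₐ[K] A[X] :=
  aeval ![Polynomial.X, 1, Polynomial.C α * Polynomial.X + Polynomial.C β]

lemma map_restrictLine (φ : A →ₐ[K] B) (α β : A) (f : MvPolynomial (Fin 3) K) :
    (restrictLine α β f).map (φ : A →+* B) = restrictLine (φ α) (φ β) f := by
  suffices (Polynomial.mapAlgHom φ).comp (restrictLine (K := K) α β) =
      restrictLine (φ α) (φ β) from DFunLike.congr_fun this f
  refine algHom_ext fun i => ?_
  fin_cases i <;> simp [restrictLine]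

lemma restrictLine_mem_degLE (α β : A) (hf : homog f e) : restrictLine α β f ∈ degLE A e := by
  obtain he | he := lt_or_ge e 0
  · rw [eq_zero_of_homog_of_neg he hf, map_zero]
    exact zero_mem _
  lift e to ℕ using he
  rw [mem_degLE_iff_natDegree_le (Int.natCast_nonneg e), Nat.cast_le, restrictLine,
    ← aeval_map_algebraMap A]
  have hdeg : (map (algebraMap K A) f).totalDegree ≤ e :=
    ((homog_natCast_iff.1 hf).map _).totalDegree_le
  refine (aeval_natDegree_le _ hdeg _ (n := 1) fun i => ?_).trans_eq (mul_one e)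
  fin_cases i
  · exact Polynomial.natDegree_X_le
  · exact Polynomial.natDegree_one.trans_le zero_le_one
  · exact Polynomial.natDegree_linear_le

/-- The form of degree `e` in `x` and `y` that dehomogenizes to `g ∈ degLE K e`. -/
noncomputable def homogenizeXY (g : K[X]) (e : ℤ) : MvPolynomial (Fin 3) K :=
  rename Fin.castSucc (g.homogenize e.toNat)

variable {g : K[X]}

lemma homog_homogenizeXY (hg : g ∈ degLE K e) : homog (homogenizeXY g e) e := by
  obtain he | he := lt_or_ge e 0
  · rw [degLE_of_neg he, Submodule.mem_bot] at hg
    rw [homogenizeXY, hg, Polynomial.homogenize_zero, map_zero]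
    exact homog_zero e
  lift e to ℕ using he
  exact homog_natCast_iff.2 (Polynomial.isHomogeneous_homogenize g).rename_isHomogeneous

lemma restrictLine_homogenizeXY (hg : g ∈ degLE K e) (α β : A) :
    restrictLine α β (homogenizeXY g e) = g.map (algebraMap K A) := by
  have hdeg : g.natDegree ≤ e.toNat := by
    rw [Polynomial.natDegree_le_iff_coeff_eq_zero]
    exact fun k hk => mem_degLE.1 hg k (by omega)
  rw [homogenizeXY, restrictLine, aeval_rename, Polynomial.aeval_homogenize_of_eq_one hdeg _ rfl]
  rfl

lemma aeval_eq_zero_of_restrictLine_eq_zero {F : Type*} [Field F] [Algebra K F] {α β x y : F}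
    (hy : y ≠ 0) (hf : homog f e) (h : restrictLine α β f = 0) :
    aeval ![x, y, α * x + β * y] f = 0 := by
  obtain he | he := lt_or_ge e 0
  · rw [eq_zero_of_homog_of_neg he hf, map_zero]
  lift e to ℕ using he
  have hscale : ![x, y, α * x + β * y] = y • ![x / y, 1, α * (x / y) + β] := by
    funext i
    fin_cases i
    · simp [mul_div_cancel₀ x hy]
    · simp
    · change α * x + β * y = y * (α * (x / y) + β)
      field_simp
  have heval : ((Polynomial.aeval (x / y)).restrictScalars K).comp (restrictLine α β) =
      aeval ![x / y, 1, α * (x / y) + β] := by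
    refine algHom_ext fun i => ?_
    fin_cases i <;> simp [restrictLine]
  rw [hscale, aeval_smul_of_isHomogeneous (homog_natCast_iff.1 hf), ← heval, AlgHom.comp_apply, h,
    map_zero, mul_zero]

/-- Specialize the line `z = α x + β y` to the line `z = (z / y) y` through the generic point. -/
lemma eq_zero_of_restrictLine_X_eq_zero (hf : homog f e)
    (h : restrictLine (X 0 : MvPolynomial (Fin 2) K) (X 1) f = 0) : f = 0 := by
  let F := FractionRing (MvPolynomial (Fin 3) K)
  let v (i : Fin 3) : F := algebraMap (MvPolynomial (Fin 3) K) F (X i)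
  have hinj : Function.Injective (algebraMap (MvPolynomial (Fin 3) K) F) :=
    IsFractionRing.injective _ _
  have hy : v 1 ≠ 0 := (map_ne_zero_iff _ hinj).2 (X_ne_zero 1)
  have hline : restrictLine 0 (v 2 / v 1) f = 0 := by
    have hmap := map_restrictLine (aeval ![0, v 2 / v 1]) (X 0 : MvPolynomial (Fin 2) K) (X 1) f
    rw [h, Polynomial.map_zero, aeval_X, aeval_X] at hmap
    exact hmap.symm
  have hpoint : ![v 0, v 1, 0 * v 0 + v 2 / v 1 * v 1] = v := by
    rw [zero_mul, zero_add, div_mul_cancel₀ _ hy]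
    funext i
    fin_cases i <;> rfl
  have hzero := aeval_eq_zero_of_restrictLine_eq_zero (x := v 0) hy hf hline
  have hv : aeval v f = algebraMap (MvPolynomial (Fin 3) K) F (aeval X f) :=
    aeval_algebraMap_apply F X f
  rw [hpoint, hv, aeval_X_left_apply] at hzero
  exact (map_eq_zero_iff _ hinj).1 hzero

lemma aeval_line_eq_zero_of_restrictLine_eq_zero {α β : K} (hf : homog f e)
    (h : restrictLine α β f = 0) :
    aeval ![X 0, X 1, C α * X 0 + C β * X 1] f = (0 : MvPolynomial (Fin 3) K) := by
  let P := MvPolynomial (Fin 3) K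
  let w : Fin 3 → P := ![X 0, X 1, C α * X 0 + C β * X 1]
  let F := FractionRing P
  have hinj : Function.Injective (algebraMap P F) := IsFractionRing.injective _ _
  have hline : restrictLine (algebraMap K F α) (algebraMap K F β) f = 0 := by
    have hmap := map_restrictLine (Algebra.ofId K F) α β f
    rw [h, Polynomial.map_zero] at hmap
    exact hmap.symm
  have hpoint : (fun i => algebraMap P F (w i)) =
      ![algebraMap P F (X 0), algebraMap P F (X 1), algebraMap K F α * algebraMap P F (X 0) +
        algebraMap K F β * algebraMap P F (X 1)] := by
    funext i
    fin_cases i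
    · rfl
    · rfl
    · simp only [w, Fin.reduceFinMk, Matrix.cons_val, map_add, map_mul,
        IsScalarTower.algebraMap_apply K P F]
      rfl
  have hy : algebraMap P F (X 1) ≠ 0 := (map_ne_zero_iff _ hinj).2 (X_ne_zero 1)
  have hw : aeval (fun i => algebraMap P F (w i)) f = algebraMap P F (aeval w f) :=
    aeval_algebraMap_apply F w f
  rw [hpoint, aeval_eq_zero_of_restrictLine_eq_zero hy hf hline] at hw
  exact (map_eq_zero_iff _ hinj).1 hw.symm

lemma linform_dvd_sub_aeval_line {c : Fin 3 → K} (hc : c 2 ≠ 0) (f : MvPolynomial (Fin 3) K) :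
    linform c ∣ f - aeval ![X 0, X 1, C (-(c 0 / c 2)) * X 0 + C (-(c 1 / c 2)) * X 1] f := by
  rw [← Ideal.mem_span_singleton, ← Ideal.Quotient.eq]
  suffices Ideal.Quotient.mkₐ K (Ideal.span {linform c}) =
      (Ideal.Quotient.mkₐ K (Ideal.span {linform c})).comp (aeval _) from DFunLike.congr_fun this f
  refine algHom_ext fun i => ?_
  rw [AlgHom.comp_apply, aeval_X, Ideal.Quotient.mkₐ_eq_mk, Ideal.Quotient.eq,
    Ideal.mem_span_singleton]
  fin_cases i
  · simp
  · simp
  · refine ⟨C (c 2)⁻¹, ?_⟩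
    have hinv : (C (c 2) * C (c 2)⁻¹ : MvPolynomial (Fin 3) K) = 1 := by
      rw [← C_mul, mul_inv_cancel₀ hc, C_1]
    simp only [linform, Fin.sum_univ_three, Fin.reduceFinMk, Matrix.cons_val, div_eq_mul_inv, C_neg,
      C_mul]
    linear_combination -(X 2 : MvPolynomial (Fin 3) K) * hinv

lemma linform_dvd_of_restrictLine_eq_zero {c : Fin 3 → K} (hc : c 2 ≠ 0) (hf : homog f e)
    (h : restrictLine (-(c 0 / c 2)) (-(c 1 / c 2)) f = 0) : linform c ∣ f := by
  have hdvd := linform_dvd_sub_aeval_line hc f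
  rwa [aeval_line_eq_zero_of_restrictLine_eq_zero hf h, sub_zero] at hdvd

lemma restrictLine_linform {c : Fin 3 → K} (hc : c 2 ≠ 0) :
    restrictLine (-(c 0 / c 2)) (-(c 1 / c 2)) (linform c) = 0 := by
  have hinv : (Polynomial.C (c 2) * Polynomial.C (c 2)⁻¹ : K[X]) = 1 := by
    rw [← Polynomial.C_mul, mul_inv_cancel₀ hc, Polynomial.C_1]
  simp only [restrictLine, linform, Fin.sum_univ_three, map_add, map_mul, aeval_X, aeval_C,
    Polynomial.algebraMap_eq, Matrix.cons_val, div_eq_mul_inv, Polynomial.C_neg]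
  linear_combination -(Polynomial.C (c 0) * Polynomial.X + Polynomial.C (c 1)) * hinv

lemma linform_ne_zero {c : Fin 3 → K} (hc : c ≠ 0) : linform c ≠ 0 := by
  obtain ⟨i, hi⟩ := Function.ne_iff.1 hc
  refine fun h => hi ?_
  have hcoeff := congrArg (coeff (Finsupp.single i 1)) h
  simpa [linform, coeff_sum, coeff_C_mul, coeff_X, Finsupp.single_left_inj] using hcoeff

end RestrictionToALine

section Criteria

open scoped Polynomial

variable {K : Type*} [Field K] {n N : ℕ} {a : Fin (n + 2) → ℤ} {b : Fin n → ℤ} {a' : Fin N → ℤ}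
  {Φ : Matrix (Fin n) (Fin (n + 2)) (MvPolynomial (Fin 3) K)} {d : ℤ} {c : Fin 3 → K}
  {A : Type*} [CommRing A] [Algebra K A]

lemma phiK_smul (g : MvPolynomial (Fin 3) K) (v : Fin (n + 2) → MvPolynomial (Fin 3) K) :
    phiK n Φ (g • v) = g • phiK n Φ v :=
  Φ.mulVecLin.map_smul g v

lemma phiK_mem_degPiece (hΦ : ∀ j i, homog (Φ j i) (a i - b j))
    {v : Fin (n + 2) → MvPolynomial (Fin 3) K} (hv : v ∈ degPiece (n + 2) a d) :
    phiK n Φ v ∈ degPiece n b d := by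
  refine mem_degPiece.2 fun j => homog_sum fun i _ => ?_
  have h := (hΦ j i).mul (mem_degPiece.1 hv i)
  rwa [add_comm, sub_add_sub_cancel] at h

lemma restrictLine_comp_mem_freeLE (α β : A) {v : Fin N → MvPolynomial (Fin 3) K}
    (hv : v ∈ degPiece N a' d) : restrictLine α β ∘ v ∈ freeLE A a' d :=
  mem_freeLE.2 fun i => restrictLine_mem_degLE α β (mem_degPiece.1 hv i)

lemma matMap_map_restrictLine (α β : A) (v : Fin (n + 2) → MvPolynomial (Fin 3) K) :
    matMap (Φ.map (restrictLine α β)) (restrictLine α β ∘ v) = restrictLine α β ∘ phiK n Φ v := by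
  funext j
  exact (RingHom.map_mulVec (restrictLine α β).toRingHom Φ v j).symm

lemma exists_restrictLine_comp_eq (α β : K) {s : Fin N → K[X]} (hs : s ∈ freeLE K a' d) :
    ∃ v ∈ degPiece N a' d, restrictLine (K := K) α β ∘ v = s := by
  refine ⟨fun i => homogenizeXY (s i) (d - a' i),
    mem_degPiece.2 fun i => homog_homogenizeXY (mem_freeLE.1 hs i), funext fun i => ?_⟩
  rw [Function.comp_apply, restrictLine_homogenizeXY (mem_freeLE.1 hs i), Algebra.algebraMap_self,
    Polynomial.map_id]

lemma exists_sub_eq_mulL_of_restrictLine_comp_eq (hc : c 2 ≠ 0)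
    {v v' : Fin N → MvPolynomial (Fin 3) K} (hv : v ∈ degPiece N a' d) (hv' : v' ∈ degPiece N a' d)
    (h : restrictLine (-(c 0 / c 2)) (-(c 1 / c 2)) ∘ v =
      restrictLine (-(c 0 / c 2)) (-(c 1 / c 2)) ∘ v') :
    ∃ w ∈ degPiece N a' (d - 1), v - v' = mulL N (linform c) w := by
  have hsub := mem_degPiece.1 (sub_mem hv hv')
  choose w hw hvw using fun i => exists_homog_mul_eq_of_dvd (homog_linform c) (hsub i)
    (linform_dvd_of_restrictLine_eq_zero hc (hsub i) <| by
      rw [Pi.sub_apply, map_sub, sub_eq_zero]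
      exact congrFun h i)
  exact ⟨w, mem_degPiece.2 fun i => sub_right_comm d (a' i) 1 ▸ hw i, funext hvw⟩

lemma mulLmap_mk (w : degPiece n b (d - 1)) :
    mulLmap n a b Φ (linform c) (homog_linform c) d (Submodule.Quotient.mk w) =
      Submodule.Quotient.mk (mulLres n b (linform c) (homog_linform c) d w) :=
  rfl

theorem surjective_mulLmap_of_cokerVanishes (hΦ : ∀ j i, homog (Φ j i) (a i - b j)) (hc : c 2 ≠ 0)
    (h : CokerVanishes a b (Φ.map (restrictLine (-(c 0 / c 2)) (-(c 1 / c 2)))) d) :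
    Function.Surjective (mulLmap n a b Φ (linform c) (homog_linform c) d) := by
  intro m
  obtain ⟨⟨w, hw⟩, rfl⟩ := Submodule.Quotient.mk_surjective _ m
  obtain ⟨s, hs, hsw⟩ := h (restrictLine_comp_mem_freeLE (-(c 0 / c 2)) (-(c 1 / c 2)) hw)
  obtain ⟨v, hv, rfl⟩ := exists_restrictLine_comp_eq (-(c 0 / c 2)) (-(c 1 / c 2)) hs
  rw [matMap_map_restrictLine] at hsw
  obtain ⟨u, hu, huw⟩ :=
    exists_sub_eq_mulL_of_restrictLine_comp_eq hc hw (phiK_mem_degPiece hΦ hv) hsw.symm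
  refine ⟨Submodule.Quotient.mk ⟨u, hu⟩, ?_⟩
  rw [mulLmap_mk, eq_comm, Submodule.Quotient.eq]
  refine ⟨v, hv, ?_⟩
  change phiK n Φ v = w - mulL n (linform c) u
  rw [← huw, sub_sub_cancel]

theorem injective_mulLmap_of_syzLE_lifts (hc : c 2 ≠ 0)
    (h : ∀ s ∈ syzLE a (Φ.map (restrictLine (-(c 0 / c 2)) (-(c 1 / c 2)))) d,
      ∃ v ∈ Nd n a Φ d, restrictLine (-(c 0 / c 2)) (-(c 1 / c 2)) ∘ v = s) :
    Function.Injective (mulLmap n a b Φ (linform c) (homog_linform c) d) := by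
  rw [injective_iff_map_eq_zero]
  intro m hm
  obtain ⟨⟨g, hg⟩, rfl⟩ := Submodule.Quotient.mk_surjective _ m
  rw [mulLmap_mk, Submodule.Quotient.mk_eq_zero] at hm
  obtain ⟨f, hf, hfg : phiK n Φ f = linform c • g⟩ := hm
  obtain ⟨v, hv, hvf⟩ := h (restrictLine (-(c 0 / c 2)) (-(c 1 / c 2)) ∘ f) <| mem_syzLE.2
    ⟨restrictLine_comp_mem_freeLE _ _ hf, by
      rw [matMap_map_restrictLine, hfg]
      funext j
      rw [Function.comp_apply, Pi.smul_apply, smul_eq_mul, map_mul, restrictLine_linform hc,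
        zero_mul, Pi.zero_apply]⟩
  obtain ⟨w, hw, hfw⟩ := exists_sub_eq_mulL_of_restrictLine_comp_eq hc hf hv.1 hvf.symm
  have hgw : linform c • phiK n Φ w = linform c • g := by
    rw [← phiK_smul, ← mulL_apply, ← hfw, map_sub, LinearMap.mem_ker.1 hv.2, sub_zero, hfg]
  rw [Submodule.Quotient.mk_eq_zero]
  exact ⟨w, hw, smul_right_injective _ (linform_ne_zero (ne_of_apply_ne (· 2) hc)) hgw⟩

lemma cokerVanishes_map_restrictLine (α β : A)
    (h : degPiece n b d ≤ (degPiece (n + 2) a d).map (phiK n Φ)) :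
    CokerVanishes a b (Φ.map (restrictLine α β)) d := by
  refine freeLE_le_of_single_X_pow_mem fun j l hl => ?_
  have hX : (Polynomial.X ^ l : K[X]) ∈ degLE K (d - b j) := X_pow_mem_degLE (by omega)
  obtain ⟨v, hv, hvj⟩ := h (x := Pi.single j (homogenizeXY (Polynomial.X ^ l) (d - b j))) <|
    mem_degPiece.2 fun i => by
      obtain rfl | hij := eq_or_ne i j
      · rw [Pi.single_eq_same]
        exact homog_homogenizeXY hX
      · rw [Pi.single_eq_of_ne hij]
        exact homog_zero _
  refine ⟨restrictLine α β ∘ v, restrictLine_comp_mem_freeLE α β hv, ?_⟩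
  rw [matMap_map_restrictLine, hvj]
  funext i
  rw [Function.comp_apply, Pi.apply_single (fun _ => restrictLine α β) (fun _ => map_zero _),
    restrictLine_homogenizeXY hX, Polynomial.map_pow, Polynomial.map_X]

end Criteria

section PartialDerivatives

variable {σ R : Type*} [CommRing R]

lemma pderiv_pderiv_comm (i j : σ) (f : MvPolynomial σ R) :
    pderiv i (pderiv j f) = pderiv j (pderiv i f) := by
  classical
  have hcomm : ⁅pderiv (R := R) i, pderiv (R := R) j⁆ = 0 := by
    refine derivation_ext fun k => ?_
    rw [Derivation.commutator_apply]
    simp [pderiv_X, Pi.single_apply, apply_ite]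
  rw [← sub_eq_zero, ← Derivation.commutator_apply, hcomm, Derivation.zero_apply]

lemma exists_eq_C_of_pderiv_eq_zero [IsDomain R] [CharZero R] {f : MvPolynomial σ R}
    (h : ∀ i, pderiv i f = 0) : ∃ r, f = C r := by
  classical
  refine ⟨coeff 0 f, ext _ _ fun m => ?_⟩
  rw [coeff_C]
  split_ifs with hm
  · rw [hm]
  obtain ⟨i, hi⟩ := Finsupp.ne_iff.1 (Ne.symm hm)
  have hle : Finsupp.single i 1 ≤ m := Finsupp.single_le_iff.2 (Nat.one_le_iff_ne_zero.2 hi)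
  have hcoeff := congrArg (coeff (m - Finsupp.single i 1)) (h i)
  rw [coeff_pderiv, tsub_add_cancel_of_le hle, coeff_zero] at hcoeff
  exact (mul_eq_zero.1 hcoeff).resolve_right (Nat.cast_add_one_ne_zero _)

lemma eq_zero_of_pderiv_eq_mul [IsDomain R] {i : σ} {f l : MvPolynomial σ R} (hf : f ≠ 0)
    (h : pderiv i f = l * f) : l = 0 := by
  by_contra hl
  have hne : pderiv i f ≠ 0 := h ▸ mul_ne_zero hl hf
  obtain ⟨m, hm, hdeg⟩ := Finset.exists_mem_eq_sup (pderiv i f).support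
    (support_nonempty.2 hne) fun m => m.sum fun _ e => e
  replace hdeg : (pderiv i f).totalDegree = m.sum fun _ e => e := hdeg
  rw [h, totalDegree_mul_of_isDomain hl hf] at hdeg
  rw [mem_support_iff, coeff_pderiv] at hm
  have hle := le_totalDegree (mem_support_iff.2 (left_ne_zero_of_mul hm))
  rw [Finsupp.sum_add_index' (fun _ => rfl) (fun _ _ _ => rfl), Finsupp.sum_single_index rfl] at hle
  omega

lemma derivation_aeval [Fintype σ] {B : Type*} [CommRing B] [Algebra R B] (D : Derivation R B B)
    (v : σ → B) (f : MvPolynomial σ R) :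
    D (aeval v f) = ∑ i, aeval v (pderiv i f) * D (v i) := by
  classical
  induction f using MvPolynomial.induction_on with
  | C r => simp
  | add p q hp hq => simp only [map_add, hp, hq, add_mul, Finset.sum_add_distrib]
  | mul_X p j hp =>
    simp only [map_mul, aeval_X, Derivation.leibniz, hp, smul_eq_mul, Finset.mul_sum, pderiv_X,
      map_add, add_mul, Finset.sum_add_distrib, Pi.single_apply, apply_ite (aeval v), map_zero,
      mul_ite, ite_mul, mul_one, mul_zero, zero_mul, Finset.sum_ite_eq,
      Finset.mem_univ, if_true, mul_assoc]

lemma exists_homog_pderiv_eq {K : Type*} [Field K] [CharZero K] {f : MvPolynomial (Fin 3) K} {e : ℤ}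
    (i : Fin 3) (hf : homog f (e - 1)) : ∃ g, homog g e ∧ pderiv i g = f := by
  refine ⟨∑ m ∈ f.support, monomial (m + Finsupp.single i 1) (coeff m f / (m i + 1)),
    homog_sum fun m hm => ?_, ?_⟩
  · refine homog_iff_degree.2 fun m' hm' => ?_
    rw [coeff_monomial] at hm'
    obtain rfl := (ite_ne_right_iff.1 hm').1
    rw [map_add, Finsupp.degree_single, Nat.cast_add,
      homog_iff_degree.1 hf m (mem_support_iff.1 hm), Nat.cast_one, sub_add_cancel]
  · conv_rhs => rw [f.as_sum]
    rw [map_sum]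
    refine Finset.sum_congr rfl fun m _ => ?_
    have hm : (m i : K) + 1 ≠ 0 := Nat.cast_add_one_ne_zero _
    simp [pderiv_monomial, hm]

end PartialDerivatives

section LineDerivation

open scoped Polynomial

lemma matMap_derivation_comp {K R ι κ : Type*} [CommRing K] [CommRing R] [Algebra K R] [Fintype ι]
    (D : Derivation K R[X] R[X]) {Ψ : Matrix κ ι R[X]} (hΨ : ∀ j i, D (Ψ j i) = 0) (s : ι → R[X]) :
    matMap Ψ (D ∘ s) = D ∘ matMap Ψ s := by
  funext j
  simp [matMap_apply, Matrix.mulVec, dotProduct, Derivation.leibniz, hΨ]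

variable {K : Type*} [Field K]

/-- Restriction of ternary forms to the line `z = α x + β y` whose coefficients `α` and `β` are
indeterminates. -/
noncomputable def genericLine : MvPolynomial (Fin 3) K →ₐ[K] (MvPolynomial (Fin 2) K)[X] :=
  restrictLine (X 0) (X 1)

/-- The partial derivative with respect to `α` (`i = 0`) or `β` (`i = 1`) on `K[α, β][X]`. -/
noncomputable def coeffPderiv (i : Fin 2) :
    Derivation K (MvPolynomial (Fin 2) K)[X] (MvPolynomial (Fin 2) K)[X] :=
  PolynomialModule.equivPolynomialSelf.compDer (pderiv i).mapCoeffs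

/-- The derivation `∂/∂α - X ∂/∂β` of `K[α, β][X]`; its kernel consists of the restrictions of
ternary forms to the generic line. -/
noncomputable def lineDeriv :
    Derivation K (MvPolynomial (Fin 2) K)[X] (MvPolynomial (Fin 2) K)[X] :=
  coeffPderiv 0 - (Polynomial.X : (MvPolynomial (Fin 2) K)[X]) • coeffPderiv 1

variable {f l : (MvPolynomial (Fin 2) K)[X]} {e : ℤ} {i : Fin 2}

lemma coeff_coeffPderiv (i : Fin 2) (f : (MvPolynomial (Fin 2) K)[X]) (k : ℕ) :
    (coeffPderiv i f).coeff k = pderiv i (f.coeff k) := rfl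

lemma coeffPderiv_C (i : Fin 2) (t : MvPolynomial (Fin 2) K) :
    coeffPderiv i (Polynomial.C t) = Polynomial.C (pderiv i t) := by
  ext1 k
  rw [coeff_coeffPderiv, Polynomial.coeff_C, Polynomial.coeff_C, apply_ite (pderiv i), map_zero]

lemma coeffPderiv_X (i : Fin 2) :
    coeffPderiv i (Polynomial.X : (MvPolynomial (Fin 2) K)[X]) = 0 := by
  ext1 k
  rw [coeff_coeffPderiv, Polynomial.coeff_X, apply_ite (pderiv i), map_zero, pderiv_one, ite_self,
    Polynomial.coeff_zero]

lemma coeffPderiv_comm (i j : Fin 2) (f : (MvPolynomial (Fin 2) K)[X]) :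
    coeffPderiv i (coeffPderiv j f) = coeffPderiv j (coeffPderiv i f) := by
  ext1 k
  exact pderiv_pderiv_comm i j _

lemma coeffPderiv_mem_degLE (hf : f ∈ degLE _ e) : coeffPderiv i f ∈ degLE _ e :=
  mem_degLE.2 fun k hk => by rw [coeff_coeffPderiv, mem_degLE.1 hf k hk, map_zero]

lemma lineDeriv_apply (f : (MvPolynomial (Fin 2) K)[X]) :
    lineDeriv f = coeffPderiv 0 f - Polynomial.X * coeffPderiv 1 f := rfl

lemma coeffPderiv_zero_eq_of_lineDeriv_eq_zero (h : lineDeriv f = 0) :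
    coeffPderiv 0 f = Polynomial.X * coeffPderiv 1 f :=
  sub_eq_zero.1 h

lemma lineDeriv_mem_degLE (hf : f ∈ degLE _ e) : lineDeriv f ∈ degLE _ (e + 1) :=
  sub_mem (degLE_mono (by omega) (coeffPderiv_mem_degLE hf))
    (X_mul_mem_degLE.2 (coeffPderiv_mem_degLE hf))

lemma coeffPderiv_one_genericLine (σ : MvPolynomial (Fin 3) K) :
    coeffPderiv 1 (genericLine σ) = genericLine (pderiv 2 σ) := by
  simp [genericLine, restrictLine, derivation_aeval, Fin.sum_univ_three, coeffPderiv_C,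
    coeffPderiv_X]

lemma lineDeriv_genericLine (σ : MvPolynomial (Fin 3) K) : lineDeriv (genericLine σ) = 0 := by
  simp [lineDeriv_apply, genericLine, restrictLine, derivation_aeval, Fin.sum_univ_three,
    coeffPderiv_C, coeffPderiv_X]

lemma exists_map_algebraMap_eq_of_coeffPderiv_eq_zero [CharZero K]
    (h : ∀ i, coeffPderiv i f = 0) :
    ∃ g : K[X], g.map (algebraMap K (MvPolynomial (Fin 2) K)) = f := by
  refine (Polynomial.lifts_iff_coeff_lifts f).2 fun k => ?_
  obtain ⟨r, hr⟩ := exists_eq_C_of_pderiv_eq_zero (f := f.coeff k) fun i => by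
    rw [← coeff_coeffPderiv, h, Polynomial.coeff_zero]
  exact ⟨r, hr.symm⟩

/-- Differentiating along `∂/∂β` lowers the degree, which reduces the claim to the case that `f`
does not involve `α` and `β`. -/
theorem exists_genericLine_eq_of_lineDeriv_eq_zero [CharZero K] (hf : f ∈ degLE _ e)
    (h : lineDeriv f = 0) : ∃ σ : MvPolynomial (Fin 3) K, homog σ e ∧ genericLine σ = f := by
  obtain ⟨N, hN⟩ : ∃ N : ℕ, e < N := ⟨(e + 1).toNat, by omega⟩
  induction N generalizing e f with
  | zero =>
    rw [degLE_of_neg hN, Submodule.mem_bot] at hf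
    exact ⟨0, homog_zero e, by rw [hf, map_zero]⟩
  | succ N ih =>
    have hf0 := coeffPderiv_zero_eq_of_lineDeriv_eq_zero h
    have hdeg : coeffPderiv 1 f ∈ degLE _ (e - 1) := by
      rw [← X_mul_mem_degLE, ← hf0, sub_add_cancel]
      exact coeffPderiv_mem_degLE hf
    have hlineDeriv : lineDeriv (coeffPderiv 1 f) = 0 := by
      rw [lineDeriv_apply, coeffPderiv_comm, hf0, Derivation.leibniz, coeffPderiv_X, smul_zero,
        add_zero, smul_eq_mul, sub_self]
    obtain ⟨τ, hτ, hτf⟩ := ih hdeg hlineDeriv (by push_cast at hN; omega)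
    obtain ⟨σ, hσ, rfl⟩ := exists_homog_pderiv_eq 2 hτ
    have hsub1 : coeffPderiv 1 (f - genericLine σ) = 0 := by
      rw [map_sub, coeffPderiv_one_genericLine, hτf, sub_self]
    have hsub0 : coeffPderiv 0 (f - genericLine σ) = 0 := by
      rw [coeffPderiv_zero_eq_of_lineDeriv_eq_zero (f := f - genericLine σ)
        (by rw [map_sub, h, lineDeriv_genericLine, sub_zero]), hsub1, mul_zero]
    obtain ⟨g, hg⟩ := exists_map_algebraMap_eq_of_coeffPderiv_eq_zero (Fin.forall_fin_two.2
      ⟨hsub0, hsub1⟩)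
    have hgdeg : g ∈ degLE K e := by
      rw [← map_mem_degLE_iff (algebraMap K (MvPolynomial (Fin 2) K)).injective, hg]
      exact sub_mem hf (restrictLine_mem_degLE _ _ hσ)
    refine ⟨homogenizeXY g e + σ, (homog_homogenizeXY hgdeg).add hσ, ?_⟩
    rw [map_add, genericLine, restrictLine_homogenizeXY hgdeg, hg, genericLine, sub_add_cancel]

lemma coeff_one_eq_zero_of_lineDeriv_eq_mul (hl : l ∈ degLE _ 1) (hf : f ≠ 0)
    (h : lineDeriv f = l * f) : l.coeff 1 = 0 := by
  have hcoeff := congrArg (Polynomial.coeff · (1 + f.natDegree)) h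
  rw [Polynomial.coeff_mul_add_eq_of_natDegree_le
      (by exact_mod_cast (mem_degLE_iff_natDegree_le zero_le_one).1 hl) le_rfl,
    lineDeriv_apply, Polynomial.coeff_sub, add_comm, Polynomial.coeff_X_mul, coeff_coeffPderiv,
    coeff_coeffPderiv, Polynomial.coeff_eq_zero_of_natDegree_lt (Nat.lt_succ_self _), map_zero,
    zero_sub, neg_eq_iff_eq_neg, ← neg_mul] at hcoeff
  exact neg_eq_zero.1 (eq_zero_of_pderiv_eq_mul (Polynomial.leadingCoeff_ne_zero.2 hf) hcoeff)

theorem eq_zero_of_lineDeriv_eq_mul (hl : l ∈ degLE _ 1) (hf : f ≠ 0) (h : lineDeriv f = l * f) :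
    l = 0 := by
  have hlC : l = Polynomial.C (l.coeff 0) := by
    ext1 k
    obtain rfl | rfl | hk : k = 0 ∨ k = 1 ∨ 1 < k := by omega
    · rw [Polynomial.coeff_C_zero]
    · rw [Polynomial.coeff_C_succ, coeff_one_eq_zero_of_lineDeriv_eq_mul hl hf h]
    · rw [mem_degLE.1 hl k (by exact_mod_cast hk), Polynomial.coeff_C_of_ne_zero (by omega)]
  have hXcoeff : (Polynomial.X * coeffPderiv 1 f).coeff f.natTrailingDegree = 0 := by
    rcases hm : f.natTrailingDegree with _ | m
    · rw [Polynomial.coeff_X_mul_zero]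
    · rw [Polynomial.coeff_X_mul, coeff_coeffPderiv,
        Polynomial.coeff_eq_zero_of_lt_natTrailingDegree (by omega), map_zero]
  have hcoeff := congrArg (Polynomial.coeff · f.natTrailingDegree) h
  rw [hlC, Polynomial.coeff_C_mul, lineDeriv_apply, Polynomial.coeff_sub, hXcoeff, sub_zero,
    coeff_coeffPderiv] at hcoeff
  rw [hlC, eq_zero_of_pderiv_eq_mul (Polynomial.trailingCoeff_nonzero_iff_nonzero.2 hf) hcoeff,
    Polynomial.C_0]

end LineDerivation

section PrimitiveVectors

variable {R ι : Type*} [CommRing R]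

/-- A vector whose coordinates have no common divisor but units, in the form of Gauss's lemma: a
common divisor of the coordinates of a multiple divides the multiplier. -/
def IsPrimitiveVector (t : ι → R) : Prop :=
  ∀ c l, (∀ i, c ∣ l * t i) → c ∣ l

lemma IsPrimitiveVector.ne_zero [Nontrivial R] {t : ι → R} (ht : IsPrimitiveVector t) : t ≠ 0 := by
  rintro rfl
  exact one_ne_zero (zero_dvd_iff.1 (ht 0 1 fun i => dvd_of_eq (mul_zero 1).symm))

lemma exists_isPrimitiveVector_smul_eq [IsDomain R] [UniqueFactorizationMonoid R] [Finite ι]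
    {s : ι → R} (hs : s ≠ 0) : ∃ (g : R) (t : ι → R), IsPrimitiveVector t ∧ s = g • t := by
  cases nonempty_fintype ι
  let _ := UniqueFactorizationMonoid.strongNormalizationMonoid (α := R)
  let _ := UniqueFactorizationMonoid.toNormalizedGCDMonoid R
  obtain ⟨i, -⟩ := Function.ne_iff.1 hs
  obtain ⟨t, hst, ht⟩ := Finset.extract_gcd s ⟨i, Finset.mem_univ i⟩
  refine ⟨Finset.univ.gcd s, t, fun c l h => ?_, funext fun i => hst i (Finset.mem_univ i)⟩
  have hdvd : c ∣ Finset.univ.gcd fun i => l * t i := Finset.dvd_gcd fun i _ => h i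
  rwa [(Finset.gcd_mul_left' Finset.univ t l).dvd_iff_dvd_right, ht, mul_one] at hdvd

end PrimitiveVectors

section PrimitiveSyzygies

open scoped Polynomial

variable {A k : Type*} [CommRing A] [IsDomain A] [Field k] [Algebra A k] [IsFractionRing A k]
  {ι κ : Type*}

lemma exists_map_eq_C_smul [Finite ι] (s : ι → k[X]) :
    ∃ c : A, c ≠ 0 ∧ ∃ t : ι → A[X],
      (fun i => (t i).map (algebraMap A k)) = Polynomial.C (algebraMap A k c) • s := by
  let _ : Algebra A[X] k[X] := Polynomial.algebra A k
  have := Polynomial.isLocalization (nonZeroDivisors A) k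
  obtain ⟨⟨_, c, hc, rfl⟩, h⟩ := IsLocalization.exist_integer_multiples_of_finite
    ((nonZeroDivisors A).map (Polynomial.C : A →+* A[X])) s
  choose t ht using h
  refine ⟨c, nonZeroDivisors.ne_zero hc, t, funext fun i => (ht i).trans ?_⟩
  rw [Algebra.smul_def]
  exact congrArg (· * s i) (Polynomial.map_C _)

lemma IsPrimitiveVector.exists_eq_smul_of_map_eq_smul_map {t u : ι → A[X]}
    (ht : IsPrimitiveVector t) {l : k[X]}
    (h : ∀ i, (u i).map (algebraMap A k) = l * (t i).map (algebraMap A k)) :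
    ∃ l' : A[X], l'.map (algebraMap A k) = l ∧ u = l' • t := by
  have hinj : Function.Injective (Polynomial.map (algebraMap A k)) :=
    Polynomial.map_injective _ (IsFractionRing.injective A k)
  obtain ⟨c, hc, l₁, hl₁⟩ := exists_map_eq_C_smul (A := A) fun _ : Unit => l
  replace hl₁ := congrFun hl₁ ()
  simp only [Pi.smul_apply, smul_eq_mul] at hl₁
  have hu (i) : Polynomial.C c * u i = l₁ () * t i := hinj <| by
    rw [Polynomial.map_mul, Polynomial.map_mul, Polynomial.map_C, h, hl₁, mul_assoc]
  obtain ⟨l', hl'⟩ := ht (Polynomial.C c) (l₁ ()) fun i => ⟨u i, (hu i).symm⟩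
  have hC : Polynomial.C c ≠ 0 := Polynomial.C_ne_zero.2 hc
  refine ⟨l', ?_, funext fun i => mul_left_cancel₀ hC ?_⟩
  · rw [hl', Polynomial.map_mul, Polynomial.map_C] at hl₁
    exact mul_left_cancel₀ (Polynomial.C_ne_zero.2
      ((map_ne_zero_iff _ (IsFractionRing.injective A k)).2 hc)) hl₁
  · rw [hu, hl', Pi.smul_apply, smul_eq_mul, mul_assoc]

lemma exists_isPrimitiveVector_mem_syzLE [UniqueFactorizationMonoid A] [Fintype ι] {a : ι → ℤ}
    {Ψ : Matrix κ ι A[X]} {p : ℤ}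
    (h : syzLE a (Ψ.map (Polynomial.map (algebraMap A k))) p ≠ ⊥) :
    ∃ t ∈ syzLE a Ψ p, IsPrimitiveVector t := by
  have hinj : Function.Injective (algebraMap A k) := IsFractionRing.injective A k
  obtain ⟨s, hs, hs0⟩ := Submodule.exists_mem_ne_zero_of_ne_bot h
  obtain ⟨c, hc, s₁, hs₁⟩ := exists_map_eq_C_smul (A := A) s
  have hs₁_mem : s₁ ∈ syzLE a Ψ p := by
    rw [← map_comp_mem_syzLE_iff hinj, hs₁]
    exact zero_add p ▸ smul_mem_syzLE (C_mem_degLE le_rfl _) hs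
  have hs₁_ne_zero : s₁ ≠ 0 := by
    rintro rfl
    simp only [Pi.zero_apply, Polynomial.map_zero] at hs₁
    exact smul_ne_zero (Polynomial.C_ne_zero.2 ((map_ne_zero_iff _ hinj).2 hc)) hs0 hs₁.symm
  obtain ⟨g, t, ht, rfl⟩ := exists_isPrimitiveVector_smul_eq hs₁_ne_zero
  have hg : g ≠ 0 := left_ne_zero_of_smul hs₁_ne_zero
  obtain ⟨hgta, hgt0⟩ := mem_syzLE.1 hs₁_mem
  rw [matMap_smul, smul_eq_zero_iff_right hg] at hgt0
  exact ⟨t, mem_syzLE.2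
    ⟨mem_freeLE.2 fun i => mem_degLE_of_mul_mem hg (mem_freeLE.1 hgta i), hgt0⟩, ht⟩

end PrimitiveSyzygies

section GenericSection

open scoped Polynomial

variable {K : Type*} [Field K] {n : ℕ} {a : Fin (n + 2) → ℤ} {b : Fin n → ℤ}
  {Φ : Matrix (Fin n) (Fin (n + 2)) (MvPolynomial (Fin 3) K)} {p : ℤ}

/-- The restriction of `Φ` to the generic line, with coefficients in the field `K(α, β)`. -/
noncomputable def genericMatrix (Φ : Matrix (Fin n) (Fin (n + 2)) (MvPolynomial (Fin 3) K)) :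
    Matrix (Fin n) (Fin (n + 2)) (FractionRing (MvPolynomial (Fin 2) K))[X] :=
  (Φ.map genericLine).map (Polynomial.map (algebraMap (MvPolynomial (Fin 2) K) _))

lemma lineDeriv_comp_mem_syzLE {t : Fin (n + 2) → (MvPolynomial (Fin 2) K)[X]}
    (ht : t ∈ syzLE a (Φ.map genericLine) p) :
    lineDeriv ∘ t ∈ syzLE a (Φ.map genericLine) (p + 1) := by
  obtain ⟨hta, ht0⟩ := mem_syzLE.1 ht
  refine mem_syzLE.2 ⟨mem_freeLE.2 fun i => ?_, ?_⟩
  · exact add_sub_right_comm p 1 (a i) ▸ lineDeriv_mem_degLE (mem_freeLE.1 hta i)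
  · rw [matMap_derivation_comp (Ψ := Φ.map genericLine) lineDeriv
      (fun j i => lineDeriv_genericLine (Φ j i)), ht0]
    exact funext fun _ => map_zero _

lemma exists_mem_Nd_of_lineDeriv_comp_eq_zero [CharZero K]
    {t : Fin (n + 2) → (MvPolynomial (Fin 2) K)[X]} (ht : t ∈ syzLE a (Φ.map genericLine) p)
    (hΦ : ∀ j i, homog (Φ j i) (a i - b j)) (h : ∀ i, lineDeriv (t i) = 0) :
    ∃ σ ∈ Nd n a Φ p, genericLine ∘ σ = t := by
  obtain ⟨hta, ht0⟩ := mem_syzLE.1 ht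
  choose σ hσ hσt using fun i =>
    exists_genericLine_eq_of_lineDeriv_eq_zero (mem_freeLE.1 hta i) (h i)
  obtain rfl : genericLine ∘ σ = t := funext hσt
  have hσp : σ ∈ degPiece (n + 2) a p := mem_degPiece.2 hσ
  refine ⟨σ, ⟨hσp, LinearMap.mem_ker.2 (funext fun j => ?_)⟩, rfl⟩
  refine eq_zero_of_restrictLine_X_eq_zero (mem_degPiece.1 (phiK_mem_degPiece hΦ hσp) j) ?_
  rw [genericLine, matMap_map_restrictLine] at ht0
  exact congrFun ht0 j

/-- The syzygy of minimal degree on the generic line comes from a syzygy of `Φ`. Its primitive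
representative `t` satisfies `lineDeriv t = l • t` because the derivation raises degrees by only
one, and then `l = 0`. -/
theorem exists_mem_Nd_genericLine_comp_notMem_freeLE [CharZero K]
    (hΦ : ∀ j i, homog (Φ j i) (a i - b j))
    (hdim : ∀ d ≤ p + 1, syzDim a (genericMatrix Φ) d = max 0 (d - p + 1)) :
    ∃ σ ∈ Nd n a Φ p, genericLine ∘ σ ∉ freeLE _ a (p - 1) := by
  let k := FractionRing (MvPolynomial (Fin 2) K)
  have hinj : Function.Injective (algebraMap (MvPolynomial (Fin 2) K) k) :=
    IsFractionRing.injective _ _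
  have hp : syzLE a (genericMatrix Φ) p ≠ ⊥ := fun hbot => by
    have := hdim p (by omega)
    rw [syzDim_eq_zero_iff.2 hbot] at this
    omega
  obtain ⟨t, ht, htprim⟩ := exists_isPrimitiveVector_mem_syzLE hp
  have htk : (fun i => (t i).map (algebraMap _ k)) ∈ syzLE a (genericMatrix Φ) p :=
    (map_comp_mem_syzLE_iff hinj).2 ht
  have htk0 : (fun i => (t i).map (algebraMap _ k)) ≠ 0 := fun h0 => htprim.ne_zero <|
    funext fun i => (Polynomial.map_eq_zero_iff hinj).1 (congrFun h0 i)
  obtain ⟨_, hl, hlk⟩ := exists_eq_smul_of_mem_syzLE htk0 htk (hdim (p + 1) le_rfl)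
    ((map_comp_mem_syzLE_iff hinj).2 (lineDeriv_comp_mem_syzLE ht))
  obtain ⟨l, rfl, hlt⟩ := htprim.exists_eq_smul_of_map_eq_smul_map (congrFun hlk)
  rw [map_mem_degLE_iff hinj, add_sub_cancel_left] at hl
  obtain ⟨i, hi⟩ := Function.ne_iff.1 htprim.ne_zero
  obtain rfl := eq_zero_of_lineDeriv_eq_mul hl hi (congrFun hlt i)
  rw [zero_smul] at hlt
  obtain ⟨σ, hσ, rfl⟩ := exists_mem_Nd_of_lineDeriv_comp_eq_zero ht hΦ (congrFun hlt)
  refine ⟨σ, hσ, fun hlow => ?_⟩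
  have hbot : syzLE a (genericMatrix Φ) (p - 1) = ⊥ := by
    rw [← syzDim_eq_zero_iff, hdim (p - 1) (by omega)]
    omega
  have hmem := (map_comp_mem_syzLE_iff hinj).2 (mem_syzLE.2 ⟨hlow, (mem_syzLE.1 ht).2⟩)
  exact htk0 ((Submodule.mem_bot _).1 (hbot ▸ hmem))

end GenericSection

section Genericity

variable {σ K : Type*} [Field K]

/-- The filter of sets of points containing a nonempty Zariski-open set, expressed through the
nonvanishing of one nonzero polynomial. -/
def zariskiGeneric (σ K : Type*) [Field K] : Filter (σ → K) where
  sets := {S | ∃ q : MvPolynomial σ K, q ≠ 0 ∧ ∀ v, eval v q ≠ 0 → v ∈ S}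
  univ_sets := ⟨1, one_ne_zero, fun _ _ => trivial⟩
  sets_of_superset := fun ⟨q, hq, hS⟩ hST => ⟨q, hq, fun v hv => hST (hS v hv)⟩
  inter_sets := fun ⟨q, hq, hS⟩ ⟨q', hq', hT⟩ => ⟨q * q', mul_ne_zero hq hq', fun v hv => by
    rw [map_mul] at hv
    exact ⟨hS v (left_ne_zero_of_mul hv), hT v (right_ne_zero_of_mul hv)⟩⟩

lemma eventually_zariskiGeneric {P : (σ → K) → Prop} :
    (∀ᶠ v in zariskiGeneric σ K, P v) ↔
      ∃ q : MvPolynomial σ K, q ≠ 0 ∧ ∀ v, eval v q ≠ 0 → P v :=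
  Iff.rfl

lemma eventually_eval_ne_zero {q : MvPolynomial σ K} (hq : q ≠ 0) :
    ∀ᶠ v in zariskiGeneric σ K, eval v q ≠ 0 :=
  ⟨q, hq, fun _ hv => hv⟩

lemma eventually_apply_ne_zero (i : σ) : ∀ᶠ v in zariskiGeneric σ K, v i ≠ 0 :=
  ⟨X i, X_ne_zero i, fun v hv => by rwa [eval_X] at hv⟩

lemma exists_eval_eq_pow_mul_eval_slopes (q : MvPolynomial (Fin 2) K) :
    ∃ (N : ℕ) (P : MvPolynomial (Fin 3) K), ∀ c : Fin 3 → K, c 2 ≠ 0 →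
      eval c P = c 2 ^ N * eval ![-(c 0 / c 2), -(c 1 / c 2)] q := by
  induction q using MvPolynomial.induction_on with
  | C r => exact ⟨0, C r, fun c _ => by rw [eval_C, eval_C, pow_zero, one_mul]⟩
  | add p q hp hq =>
    obtain ⟨M, P, hP⟩ := hp
    obtain ⟨N, Q, hQ⟩ := hq
    refine ⟨M + N, X 2 ^ N * P + X 2 ^ M * Q, fun c hc => ?_⟩
    simp only [map_add, map_mul, map_pow, eval_X, hP c hc, hQ c hc]
    ring
  | mul_X p i hp =>
    obtain ⟨N, P, hP⟩ := hp
    refine ⟨N + 1, -(P * X i.castSucc), fun c hc => ?_⟩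
    have hi : c 2 * ![-(c 0 / c 2), -(c 1 / c 2)] i = -c i.castSucc := by
      fin_cases i <;> simp [mul_div_cancel₀ _ hc]
    simp only [map_neg, map_mul, eval_X, hP c hc]
    linear_combination -(c 2 ^ N * eval ![-(c 0 / c 2), -(c 1 / c 2)] p) * hi

/-- The slopes are the `α` and `β` for which `linform c = 0` is the line `z = α x + β y`. -/
lemma tendsto_slopes_zariskiGeneric [Infinite K] :
    Tendsto (fun c : Fin 3 → K => ![-(c 0 / c 2), -(c 1 / c 2)]) (zariskiGeneric (Fin 3) K)
      (zariskiGeneric (Fin 2) K) := by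
  rintro S ⟨q, hq, hS⟩
  obtain ⟨N, P, hP⟩ := exists_eval_eq_pow_mul_eval_slopes q
  have hP0 : P ≠ 0 := by
    rintro rfl
    refine hq (MvPolynomial.funext fun v => ?_)
    have hv : ![-(-v 0 / 1), -(-v 1 / 1)] = v := by
      funext i
      fin_cases i <;> simp
    have h := hP ![-v 0, -v 1, 1] one_ne_zero
    simp only [Matrix.cons_val, hv, one_pow, one_mul, map_zero] at h
    rw [← h, map_zero]
  rw [mem_map]
  filter_upwards [eventually_apply_ne_zero 2, eventually_eval_ne_zero hP0] with c hc hPc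
  rw [hP c hc] at hPc
  exact hS _ (right_ne_zero_of_mul hPc)

end Genericity

section Specialization

open scoped Polynomial

variable {ι κ : Type*} {a : ι → ℤ} {b : κ → ℤ} {d : ℤ}

lemma exists_matMap_eq_C_smul {A k : Type*} [CommRing A] [IsDomain A] [Field k] [Algebra A k]
    [IsFractionRing A k] [Fintype ι] {Ψ : Matrix κ ι A[X]}
    (h : CokerVanishes a b (Ψ.map (Polynomial.map (algebraMap A k))) d) {s : κ → A[X]}
    (hs : s ∈ freeLE A b d) :
    ∃ c : A, c ≠ 0 ∧ ∃ t ∈ freeLE A a d, matMap Ψ t = Polynomial.C c • s := by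
  have hinj : Function.Injective (algebraMap A k) := IsFractionRing.injective A k
  obtain ⟨u, hu, hus⟩ := h (map_comp_mem_freeLE (algebraMap A k) hs)
  obtain ⟨c, hc, t, ht⟩ := exists_map_eq_C_smul (A := A) u
  refine ⟨c, hc, t, mem_freeLE.2 fun i => ?_, funext fun j => Polynomial.map_injective _ hinj ?_⟩
  · rw [← map_mem_degLE_iff hinj]
    have hmem := smul_mem_freeLE (C_mem_degLE le_rfl (algebraMap A k c)) hu
    rw [← ht, zero_add] at hmem
    exact mem_freeLE.1 hmem i
  · have hmap := congrFun (matMap_map (algebraMap A k) Ψ t) j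
    rw [ht, matMap_smul, hus] at hmap
    rw [← hmap, Pi.smul_apply, Pi.smul_apply, smul_eq_mul, smul_eq_mul, Polynomial.map_mul,
      Polynomial.map_C]

variable {σ K : Type*} [Field K]

lemma eventually_cokerVanishes_map_eval {k : Type*} [Field k] [Algebra (MvPolynomial σ K) k]
    [IsFractionRing (MvPolynomial σ K) k] [Fintype ι] [Finite κ]
    {Ψ : Matrix κ ι (MvPolynomial σ K)[X]}
    (h : CokerVanishes a b (Ψ.map (Polynomial.map (algebraMap (MvPolynomial σ K) k))) d) :
    ∀ᶠ v in zariskiGeneric σ K, CokerVanishes a b (Ψ.map (Polynomial.map (eval v))) d := by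
  classical
  have hmonomial (j : κ) : ∀ᶠ v in zariskiGeneric σ K, ∀ l ∈ Finset.range (d - b j + 1).toNat,
      Pi.single j (Polynomial.X ^ l) ∈
        (freeLE K a d).map (matMap (Ψ.map (Polynomial.map (eval v)))) := by
    refine (eventually_all_finset _).2 fun l hl => ?_
    have hs : Pi.single j (Polynomial.X ^ l) ∈ freeLE (MvPolynomial σ K) b d :=
      single_X_pow_mem_freeLE (by rw [Finset.mem_range] at hl; omega)
    obtain ⟨c, hc, t, ht, htc⟩ := exists_matMap_eq_C_smul h hs
    filter_upwards [eventually_eval_ne_zero hc] with v hv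
    refine ⟨(eval v c)⁻¹ • fun i => (t i).map (eval v),
      Submodule.smul_mem _ _ (map_comp_mem_freeLE _ ht), ?_⟩
    rw [map_smul, matMap_map, htc, inv_smul_eq_iff₀ hv]
    funext i
    rw [Pi.smul_apply, Pi.smul_apply, smul_eq_mul, Polynomial.map_mul, Polynomial.map_C,
      Polynomial.smul_eq_C_mul]
    congr 1
    obtain rfl | hij := eq_or_ne i j
    · simp
    · simp [hij]
  filter_upwards [eventually_all.2 hmonomial] with v hv
  exact freeLE_le_of_single_X_pow_mem fun j l hl => hv j l (Finset.mem_range.2 (by omega))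

lemma eventually_map_eval_notMem_freeLE {t : ι → (MvPolynomial σ K)[X]}
    (ht : t ∉ freeLE (MvPolynomial σ K) a d) :
    ∀ᶠ v in zariskiGeneric σ K, (fun i => (t i).map (eval v)) ∉ freeLE K a d := by
  simp only [mem_freeLE, mem_degLE, not_forall, Polynomial.coeff_map] at ht ⊢
  obtain ⟨i, m, hm, htim⟩ := ht
  filter_upwards [eventually_eval_ne_zero htim] with v hv
  exact ⟨i, m, hm, hv⟩

end Specialization

section GeneralLine

open scoped Polynomial

variable {K : Type*} [Field K] {n : ℕ} {a : Fin (n + 2) → ℤ} {b : Fin n → ℤ}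
  {Φ : Matrix (Fin n) (Fin (n + 2)) (MvPolynomial (Fin 3) K)} {d p r : ℤ}

lemma map_eval_genericLine (v : Fin 2 → K) (f : MvPolynomial (Fin 3) K) :
    (genericLine f).map (eval v) = restrictLine (v 0) (v 1) f := by
  have h := map_restrictLine (aeval v) (X 0 : MvPolynomial (Fin 2) K) (X 1) f
  rwa [aeval_X, aeval_X] at h

lemma map_map_eval_genericLine (v : Fin 2 → K)
    (Φ : Matrix (Fin n) (Fin (n + 2)) (MvPolynomial (Fin 3) K)) :
    (Φ.map genericLine).map (Polynomial.map (eval v)) = Φ.map (restrictLine (v 0) (v 1)) :=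
  Matrix.ext fun j i => map_eval_genericLine v (Φ j i)

lemma map_map_algebraMap_restrictLine {A B : Type*} [CommRing A] [Algebra K A] [CommRing B]
    [Algebra K B] [Algebra A B] [IsScalarTower K A B] (α β : A)
    (Φ : Matrix (Fin n) (Fin (n + 2)) (MvPolynomial (Fin 3) K)) :
    (Φ.map (restrictLine α β)).map (Polynomial.map (algebraMap A B)) =
      Φ.map (restrictLine (algebraMap A B α) (algebraMap A B β)) :=
  Matrix.ext fun j i => map_restrictLine (IsScalarTower.toAlgHom K A B) α β (Φ j i)

lemma genericMatrix_mem_degLE (hΦ : ∀ j i, homog (Φ j i) (a i - b j)) (j : Fin n)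
    (i : Fin (n + 2)) : genericMatrix Φ j i ∈ degLE _ (a i - b j) :=
  map_mem_degLE _ (restrictLine_mem_degLE _ _ (hΦ j i))

lemma cokerVanishes_genericMatrix
    (h : degPiece n b d ≤ (degPiece (n + 2) a d).map (phiK n Φ)) :
    CokerVanishes a b (genericMatrix Φ) d := by
  rw [genericMatrix, genericLine, map_map_algebraMap_restrictLine]
  exact cokerVanishes_map_restrictLine _ _ h

lemma eventually_cokerVanishes_map_restrictLine (h : CokerVanishes a b (genericMatrix Φ) d) :
    ∀ᶠ v in zariskiGeneric (Fin 2) K,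
      CokerVanishes a b (Φ.map (restrictLine (v 0) (v 1))) d := by
  filter_upwards [eventually_cokerVanishes_map_eval (Ψ := Φ.map genericLine) h] with v hv
  rwa [map_map_eval_genericLine] at hv

lemma eventually_forall_ge_cokerVanishes (hfin : FiniteColength n a b Φ)
    (h : ∀ d ≥ r, CokerVanishes a b (genericMatrix Φ) d) :
    ∀ᶠ v in zariskiGeneric (Fin 2) K,
      ∀ d ≥ r, CokerVanishes a b (Φ.map (restrictLine (v 0) (v 1))) d := by
  obtain ⟨D, hD⟩ := hfin
  have hrange : ∀ᶠ v in zariskiGeneric (Fin 2) K, ∀ d ∈ Finset.Ico r D,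
      CokerVanishes a b (Φ.map (restrictLine (v 0) (v 1))) d :=
    (eventually_all_finset _).2 fun d hd =>
      eventually_cokerVanishes_map_restrictLine (h d (Finset.mem_Ico.1 hd).1)
  filter_upwards [hrange] with v hv d hd
  obtain hdD | hDd := lt_or_ge d D
  · exact hv d (Finset.mem_Ico.2 ⟨hd, hdD⟩)
  · exact cokerVanishes_map_restrictLine _ _ (hD d hDd)

lemma exists_mem_Nd_restrictLine_comp_eq {α β : K} {σ : Fin (n + 2) → MvPolynomial (Fin 3) K}
    (hσ : σ ∈ Nd n a Φ p) (hσp : restrictLine α β ∘ σ ∉ freeLE K a (p - 1))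
    (hdim : syzDim a (Φ.map (restrictLine α β)) r = max 0 (r - p + 1)) (hdr : d ≤ r)
    {s : Fin (n + 2) → K[X]} (hs : s ∈ syzLE a (Φ.map (restrictLine α β)) d) :
    ∃ w ∈ Nd n a Φ d, restrictLine α β ∘ w = s := by
  have hσs : restrictLine α β ∘ σ ∈ syzLE a (Φ.map (restrictLine α β)) p := by
    refine mem_syzLE.2 ⟨restrictLine_comp_mem_freeLE α β hσ.1, ?_⟩
    rw [matMap_map_restrictLine, LinearMap.mem_ker.1 hσ.2]
    exact funext fun _ => map_zero _
  have hσ0 : restrictLine α β ∘ σ ≠ 0 := by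
    intro h0
    exact hσp (by rw [h0]; exact zero_mem _)
  obtain ⟨g, -, rfl⟩ := exists_eq_smul_of_mem_syzLE hσ0 hσs hdim
    (syzLE_mono hdr hs)
  have hg : g ∈ degLE K (d - p) := mem_degLE_of_smul_mem_freeLE hσp (mem_syzLE.1 hs).1
  refine ⟨homogenizeXY g (d - p) • σ, ⟨mem_degPiece.2 fun i => ?_, ?_⟩, funext fun i => ?_⟩
  · exact sub_add_sub_cancel d p (a i) ▸ (homog_homogenizeXY hg).mul (mem_degPiece.1 hσ.1 i)
  · rw [SetLike.mem_coe, LinearMap.mem_ker, phiK_smul, LinearMap.mem_ker.1 hσ.2, smul_zero]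
  · rw [Function.comp_apply, Pi.smul_apply, smul_eq_mul, map_mul, restrictLine_homogenizeXY hg,
      Algebra.algebraMap_self, Polynomial.map_id]
    rfl

lemma eventually_syzDim_eq (hΦ : ∀ j i, homog (Φ j i) (a i - b j))
    (h : CokerVanishes a b (genericMatrix Φ) r) :
    ∀ᶠ v in zariskiGeneric (Fin 2) K,
      syzDim a (Φ.map (restrictLine (v 0) (v 1))) r = syzDim a (genericMatrix Φ) r := by
  filter_upwards [eventually_cokerVanishes_map_restrictLine h] with v hv
  exact syzDim_eq_syzDim_of_cokerVanishes
    (Ψ := Φ.map (restrictLine (v 0) (v 1))) (fun j i => restrictLine_mem_degLE _ _ (hΦ j i))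
    (genericMatrix_mem_degLE hΦ) hv h

/-- If `p < r`, the syzygies of degree below `r` on a general line are the multiples of the
restriction of a syzygy of `Φ`; otherwise there are none. -/
theorem eventually_forall_lt_syzLE_lifts [CharZero K] (hΦ : ∀ j i, homog (Φ j i) (a i - b j))
    (hr : CokerVanishes a b (genericMatrix Φ) r)
    (hdim : ∀ d ≤ r, syzDim a (genericMatrix Φ) d = max 0 (d - p + 1)) :
    ∀ᶠ v in zariskiGeneric (Fin 2) K,
      ∀ d < r, ∀ s ∈ syzLE a (Φ.map (restrictLine (v 0) (v 1))) d,
        ∃ w ∈ Nd n a Φ d, restrictLine (v 0) (v 1) ∘ w = s := by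
  have hdimr := hdim r le_rfl
  obtain hpr | hrp := lt_or_ge p r
  · obtain ⟨σ, hσ, hσp⟩ := exists_mem_Nd_genericLine_comp_notMem_freeLE hΦ
      fun d hd => hdim d (by omega)
    filter_upwards [eventually_syzDim_eq hΦ hr, eventually_map_eval_notMem_freeLE hσp]
      with v hv hvσ d hd s hs
    simp only [Function.comp_apply, map_eval_genericLine] at hvσ
    exact exists_mem_Nd_restrictLine_comp_eq hσ hvσ (hv.trans hdimr) hd.le hs
  · filter_upwards [eventually_syzDim_eq hΦ hr] with v hv d hd s hs
    obtain rfl : s = 0 := by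
      by_contra hs0
      have := le_syzDim_of_mem_syzLE hs0 hs r
      omega
    exact ⟨0, zero_mem _, funext fun _ => map_zero _⟩

end GeneralLine

end WeakLefschetz

open WeakLefschetz in
theorem statement7_general {K : Type*} [Field K] [CharZero K]
    (n : ℕ) (a : Fin (n + 2) → ℤ) (b : Fin n → ℤ)
    (Φ : Matrix (Fin n) (Fin (n + 2)) (MvPolynomial (Fin 3) K))
    (hΦ : ∀ j i, homog (Φ j i) (a i - b j))
    (hfin : FiniteColength n a b Φ) :
    ∃ r : ℤ, ∃ P : MvPolynomial (Fin 3) K, P ≠ 0 ∧ ∀ c : Fin 3 → K, eval c P ≠ 0 →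
      (∀ d : ℤ, d < r →
        Function.Injective (mulLmap n a b Φ (linform c) (homog_linform c) d)) ∧
      (∀ d : ℤ, r ≤ d →
        Function.Surjective (mulLmap n a b Φ (linform c) (homog_linform c) d)) := by
  have hcoker : ∀ᶠ d in Filter.atTop, CokerVanishes a b (genericMatrix Φ) d :=
    (Filter.eventually_atTop.2 hfin).mono fun _ => cokerVanishes_genericMatrix
  obtain ⟨r, p, hvanish, hdim⟩ := exists_cokerVanishes_and_syzDim_eq_max
    (Ψ := genericMatrix Φ) (genericMatrix_mem_degLE hΦ) (by simp) hcoker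
  have hlines := (eventually_forall_ge_cokerVanishes hfin hvanish).and
    (eventually_forall_lt_syzLE_lifts hΦ (hvanish r le_rfl) hdim)
  refine ⟨r, eventually_zariskiGeneric.1 ?_⟩
  filter_upwards [tendsto_slopes_zariskiGeneric.eventually hlines, eventually_apply_ne_zero 2]
    with c ⟨hsurj, hinj⟩ hc
  exact ⟨fun d hd => injective_mulLmap_of_syzLE_lifts hc (hinj d hd),
    fun d hd => surjective_mulLmap_of_cokerVanishes hΦ hc (hsurj d hd)⟩

/-- For a general linear form `L` there is an integer `r` such that the
multiplication map `×L : M_{d-1} → M_d` is injective for all `d < r` and surjective for all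
`d ≥ r`. -/
theorem statement7 {K : Type*} [Field K] [IsAlgClosed K] [CharZero K]
    (n : ℕ) (a : Fin (n + 2) → ℤ) (b : Fin n → ℤ)
    (Φ : Matrix (Fin n) (Fin (n + 2)) (MvPolynomial (Fin 3) K))
    (hΦ : ∀ j i, homog (Φ j i) (a i - b j))
    (hfin : FiniteColength n a b Φ) :
    ∃ P : MvPolynomial (Fin 3) K, P ≠ 0 ∧ ∀ c : Fin 3 → K, eval c P ≠ 0 →
      ∃ r : ℤ,
        (∀ d : ℤ, d < r →
          Function.Injective (mulLmap n a b Φ (linform c) (homog_linform c) d)) ∧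
        (∀ d : ℤ, r ≤ d →
          Function.Surjective (mulLmap n a b Φ (linform c) (homog_linform c) d)) :=
  let ⟨r, P, hP, h⟩ := statement7_general n a b Φ hΦ hfin
  ⟨P, hP, fun c hc => ⟨r, h c hc⟩⟩
end
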